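/- arXiv:2302.01184 — 3 statements merged into one kernel-verified Lean document; each statement's English description precedes it below -/
import Mathlib

section
/- There is no constant C such that ‖‖R₁₂ f(x,y)‖_{L²_x}‖_{L^∞_y} ≤ C ‖‖f(x,y)‖_{L^∞_y}‖_{L²_x} for all Schwartz functions f on ℝ². -/
open MeasureTheory FourierTransform Real SchwartzMap
open scoped ENNReal

/-- The double Riesz transform `R₁₂` on `ℝ²`, realized as the Fourier multiplier
with symbol `ξ₁ξ₂/|ξ|²` (via iterated one-dimensional Fourier transforms). -/
noncomputable def doubleRiesz (f : ℝ → ℝ → ℂ) (x y : ℝ) : ℂ :=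
  𝓕⁻ (fun ξ₁ : ℝ => 𝓕⁻ (fun ξ₂ : ℝ =>
    ((ξ₁ * ξ₂ / (ξ₁ ^ 2 + ξ₂ ^ 2) : ℝ) : ℂ) *
      𝓕 (fun s : ℝ => 𝓕 (fun t : ℝ => f s t) ξ₂) ξ₁) y) x

noncomputable section RieszAux

lemma tensor_norm_fst (u : 𝓢(ℝ, ℂ)) (p : ℝ × ℝ) (i : ℕ) :
    ‖iteratedFDeriv ℝ i (fun q : ℝ × ℝ => u q.1) p‖ ≤ ‖iteratedFDeriv ℝ i u p.1‖ := by
  have h := ContinuousLinearMap.iteratedFDeriv_comp_right (ContinuousLinearMap.fst ℝ ℝ ℝ)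
    (u.smooth ⊤) p (i := i) (by exact_mod_cast le_top)
  have h2 : (fun q : ℝ × ℝ => u q.1) = u ∘ (ContinuousLinearMap.fst ℝ ℝ ℝ) := rfl
  rw [h2, h]
  refine (ContinuousMultilinearMap.norm_compContinuousLinearMap_le _ _).trans ?_
  have : ∏ _j : Fin i, ‖ContinuousLinearMap.fst ℝ ℝ ℝ‖ ≤ 1 :=
    Finset.prod_le_one (fun _ _ => norm_nonneg _) (fun _ _ => ContinuousLinearMap.norm_fst_le ..)
  exact mul_le_of_le_one_right (norm_nonneg _) this

lemma tensor_norm_snd (u : 𝓢(ℝ, ℂ)) (p : ℝ × ℝ) (i : ℕ) :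
    ‖iteratedFDeriv ℝ i (fun q : ℝ × ℝ => u q.2) p‖ ≤ ‖iteratedFDeriv ℝ i u p.2‖ := by
  have h := ContinuousLinearMap.iteratedFDeriv_comp_right (ContinuousLinearMap.snd ℝ ℝ ℝ)
    (u.smooth ⊤) p (i := i) (by exact_mod_cast le_top)
  have h2 : (fun q : ℝ × ℝ => u q.2) = u ∘ (ContinuousLinearMap.snd ℝ ℝ ℝ) := rfl
  rw [h2, h]
  refine (ContinuousMultilinearMap.norm_compContinuousLinearMap_le _ _).trans ?_
  have : ∏ _j : Fin i, ‖ContinuousLinearMap.snd ℝ ℝ ℝ‖ ≤ 1 :=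
    Finset.prod_le_one (fun _ _ => norm_nonneg _) (fun _ _ => ContinuousLinearMap.norm_snd_le ..)
  exact mul_le_of_le_one_right (norm_nonneg _) this

def tens (u v : 𝓢(ℝ, ℂ)) : 𝓢(ℝ × ℝ, ℂ) where
  toFun p := u p.1 * v p.2
  smooth' := ((u.smooth ⊤).comp contDiff_fst).mul ((v.smooth ⊤).comp contDiff_snd)
  decay' := by
    intro k n
    choose Cu hu using fun a i => u.decay a i
    choose Cv hv using fun a i => v.decay a i
    refine ⟨∑ i ∈ Finset.range (n + 1), (n.choose i : ℝ) *
      (Cu k i * Cv 0 (n - i) + Cu 0 i * Cv k (n - i)), fun p => ?_⟩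
    have h := norm_iteratedFDeriv_mul_le (𝕜 := ℝ) (f := fun q : ℝ × ℝ => u q.1)
      (g := fun q : ℝ × ℝ => v q.2) (N := ((⊤ : ℕ∞) : WithTop ℕ∞))
      (((u.smooth ⊤).comp contDiff_fst)) (((v.smooth ⊤).comp contDiff_snd)) p (n := n)
      (by exact_mod_cast le_top)
    refine (mul_le_mul_of_nonneg_left h (by positivity)).trans ?_
    rw [Finset.mul_sum]
    refine Finset.sum_le_sum fun i _ => ?_
    have hk : ‖p‖ ^ k ≤ ‖p.1‖ ^ k + ‖p.2‖ ^ k := by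
      rcases max_cases ‖p.1‖ ‖p.2‖ with ⟨h, _⟩ | ⟨h, _⟩ <;> rw [Prod.norm_def, h]
      · linarith [pow_nonneg (norm_nonneg p.2) k]
      · linarith [pow_nonneg (norm_nonneg p.1) k]
    have h1 := tensor_norm_fst u p i
    have h2 := tensor_norm_snd v p (n - i)
    have e1 := (hu k i).2 p.1
    have e2 := (hu 0 i).2 p.1
    have e3 := (hv k (n - i)).2 p.2
    have e4 := (hv 0 (n - i)).2 p.2
    have c1 := (hu k i).1
    have c2 := (hu 0 i).1
    rw [pow_zero, one_mul] at e2 e4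
    calc _ ≤ (‖p.1‖ ^ k + ‖p.2‖ ^ k) * ((n.choose i : ℝ) * ‖iteratedFDeriv ℝ i u p.1‖ *
          ‖iteratedFDeriv ℝ (n - i) v p.2‖) := by gcongr
      _ = (n.choose i : ℝ) * ((‖p.1‖ ^ k * ‖iteratedFDeriv ℝ i u p.1‖) *
          ‖iteratedFDeriv ℝ (n - i) v p.2‖ + ‖iteratedFDeriv ℝ i u p.1‖ *
            (‖p.2‖ ^ k * ‖iteratedFDeriv ℝ (n - i) v p.2‖)) := by ring
      _ ≤ _ := by
        gcongr

@[simp] lemma tens_apply (u v : 𝓢(ℝ, ℂ)) (s t : ℝ) : tens u v (s, t) = u s * v t := rfl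

def betaB : ContDiffBump (0 : ℝ) := ⟨1/8, 1/4, by norm_num, by norm_num⟩
def chiB : ContDiffBump (0 : ℝ) := ⟨1/2, 1, by norm_num, by norm_num⟩

def bS : 𝓢(ℝ, ℂ) := HasCompactSupport.toSchwartzMap (f := fun x => ((betaB x : ℝ) : ℂ))
  (betaB.hasCompactSupport.comp_left (g := fun x : ℝ => (x : ℂ)) (by simp))
  (Complex.ofRealCLM.contDiff.comp betaB.contDiff)

lemma bS_apply (x : ℝ) : bS x = ((betaB x : ℝ) : ℂ) := rfl

def rS : 𝓢(ℝ, ℂ) := HasCompactSupport.toSchwartzMap (f := fun x => ((x * chiB x : ℝ) : ℂ))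
  ((chiB.hasCompactSupport.mul_left (f := fun x : ℝ => x)).comp_left
    (g := fun x : ℝ => (x : ℂ)) (by simp))
  (Complex.ofRealCLM.contDiff.comp (contDiff_id.mul chiB.contDiff))

lemma rS_apply (x : ℝ) : rS x = ((x * chiB x : ℝ) : ℂ) := rfl

def bK (k : ℕ) : 𝓢(ℝ, ℂ) := bS.compSubConstCLM ℂ ((2 : ℝ) ^ k)

lemma bK_apply (k : ℕ) (x : ℝ) : bK k x = ((betaB (x - 2 ^ k) : ℝ) : ℂ) := rfl

def rK (k : ℕ) : 𝓢(ℝ, ℂ) := (((2 : ℝ) ^ k)⁻¹ : ℂ) • compCLMOfContinuousLinearEquiv ℂ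
  (ContinuousLinearEquiv.unitsEquivAut ℝ (Units.mk0 (((2 : ℝ) ^ k)⁻¹) (by positivity))) rS

lemma rK_apply (k : ℕ) (x : ℝ) :
    rK k x = ((((2 : ℝ) ^ k)⁻¹ * ((x * (2 ^ k)⁻¹) * chiB (x * (2 ^ k)⁻¹)) : ℝ) : ℂ) := by
  simp [rK, rS_apply]

lemma fourierInv_S (f : 𝓢(ℝ, ℂ)) (x : ℝ) : (𝓕⁻ f) x = ∫ v : ℝ, Complex.exp (2 * π * (v * x) * Complex.I) * f v := by
  rw [fourierInv_coe, Real.fourierInv_eq']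
  congr 1; ext v
  simp [mul_comm]

lemma norm_bK (k : ℕ) (x : ℝ) : ‖(𝓕⁻ (bK k)) x‖ = ‖(𝓕⁻ bS) x‖ := by
  rw [fourierInv_S, fourierInv_S]
  rw [← integral_sub_right_eq_self (fun v : ℝ => Complex.exp (2 * π * (v * x) * Complex.I) * bS v) ((2 : ℝ) ^ k)]
  have : ∀ v : ℝ, Complex.exp (2 * π * (v * x) * Complex.I) * bK k v =
     Complex.exp ((2 * π * (2 ^ k * x) : ℝ) * Complex.I) * (Complex.exp (2 * π * ((v - (2 : ℝ) ^ k : ℝ) * x) * Complex.I) * bS (v - 2 ^ k)) := by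
    intro v
    have hb : bK k v = bS (v - 2 ^ k) := rfl
    rw [hb, ← mul_assoc (Complex.exp _) (Complex.exp _), ← Complex.exp_add]
    congr 2
    push_cast; ring
  simp_rw [this]
  rw [integral_const_mul, norm_mul, Complex.norm_exp_ofReal_mul_I, one_mul]

lemma rK_inv (k : ℕ) (x : ℝ) : (𝓕⁻ (rK k)) x = (𝓕⁻ rS) (2 ^ k * x) := by
  rw [fourierInv_S, fourierInv_S]
  have h := Measure.integral_comp_mul_right (fun v : ℝ => Complex.exp (2 * π * (v * (2 ^ k * x : ℝ)) * Complex.I) * rS v) (((2 : ℝ) ^ k)⁻¹)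
  rw [inv_inv, abs_of_pos (by positivity)] at h
  have h2 : ∀ v : ℝ, Complex.exp (2 * π * (v * x) * Complex.I) * rK k v = (((2 : ℝ) ^ k)⁻¹ : ℂ) *
     (Complex.exp (2 * π * ((v * ((2 : ℝ) ^ k)⁻¹ : ℝ) * (2 ^ k * x : ℝ)) * Complex.I) * rS (v * ((2 : ℝ) ^ k)⁻¹)) := by
    intro v
    rw [rK_apply, rS_apply]
    have : (v : ℂ) * x = (v * ((2 : ℝ) ^ k)⁻¹ : ℝ) * (2 ^ k * x : ℝ) := by
      push_cast; field_simp
    rw [this]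
    push_cast; ring
  simp_rw [h2]
  rw [integral_const_mul, h]
  simp

lemma rS_zero : (𝓕⁻ rS) 0 = 0 := by
  rw [fourierInv_S]
  have h := integral_neg_eq_self (fun v : ℝ => rS v) volume
  have h2 : ∀ v, rS (-v) = - rS v := by
    intro v; rw [rS_apply, rS_apply, chiB.neg]; simp
  simp_rw [h2, integral_neg] at h
  simp only [Complex.ofReal_zero, mul_zero, zero_mul, Complex.exp_zero, one_mul]
  exact self_eq_neg.mp h.symm

lemma psi_bound : ∃ C : ℝ, 0 ≤ C ∧ ∀ u : ℝ,
    ‖(𝓕⁻ rS) u‖ ≤ C * (2 * |u| / (1 + 2 * |u|) - |u| / (1 + |u|)) := by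
  set p := 𝓕⁻ rS with hp
  obtain ⟨C1, h1p, h1⟩ := p.decay 0 1
  obtain ⟨C2, h2p, h2⟩ := p.decay 2 0
  have hl : ∀ u, ‖p u‖ ≤ C1 * |u| := by
    intro u
    have := Convex.norm_image_sub_le_of_norm_fderiv_le (𝕜 := ℝ) (f := p) (C := C1) (s := Set.univ) (x := 0) (y := u)
      (fun x _ => p.differentiableAt) (fun x _ => by
        have := h1 x
        rwa [pow_zero, one_mul, norm_iteratedFDeriv_one] at this) convex_univ trivial trivial
    simpa [hp, rS_zero] using this
  refine ⟨6 * (C1 + C2), by positivity, fun u => ?_⟩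
  have e2 := h2 u
  rw [norm_iteratedFDeriv_zero, Real.norm_eq_abs] at e2
  have e1 := hl u
  have hu := abs_nonneg u
  have hn := norm_nonneg (p u)
  generalize |u| = a at *
  generalize ‖p u‖ = w at *
  have : 2 * a / (1 + 2 * a) - a / (1 + a) = a / ((1 + 2 * a) * (1 + a)) := by
    field_simp; ring
  rw [this, ← mul_div_assoc, le_div_iff₀ (by positivity)]
  rcases le_total a 1 with h | h
  · have : (1 + 2 * a) * (1 + a) ≤ 6 := by nlinarith
    calc _ ≤ w * 6 := by gcongr
      _ ≤ 6 * (C1 + C2) * a := by nlinarith [mul_nonneg h2p.le hu]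
  · have : (1 + 2 * a) * (1 + a) ≤ 6 * a ^ 2 := by nlinarith
    calc _ ≤ w * (6 * a ^ 2) := by gcongr
      _ ≤ 6 * C2 * 1 := by linarith
      _ ≤ 6 * (C1 + C2) * a := by gcongr; linarith

lemma psi_sum : ∃ M : ℝ, 0 ≤ M ∧ ∀ (N : ℕ) (t : ℝ),
    ∑ k ∈ Finset.range N, ‖(𝓕⁻ (rK k)) t‖ ≤ M := by
  obtain ⟨C, hC, h⟩ := psi_bound
  refine ⟨C, hC, fun N t => ?_⟩
  set H : ℕ → ℝ := fun k => 2 ^ k * |t| / (1 + 2 ^ k * |t|)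
  calc _ ≤ ∑ k ∈ Finset.range N, C * (H (k + 1) - H k) := by
        refine Finset.sum_le_sum fun k _ => ?_
        rw [rK_inv]
        refine (h _).trans (le_of_eq ?_)
        simp only [H, abs_mul, abs_pow, abs_two, pow_succ]
        ring_nf
    _ = C * (H N - H 0) := by rw [← Finset.mul_sum, Finset.sum_range_sub]
    _ ≤ C * 1 := by
        gcongr
        have a1 : H N ≤ 1 := div_le_one_of_le₀ (by linarith) (by positivity)
        have a2 : 0 ≤ H 0 := by positivity
        linarith
    _ = C := mul_one C


def fN (N : ℕ) : 𝓢(ℝ × ℝ, ℂ) := ∑ k ∈ Finset.range N, tens (𝓕⁻ (bK k)) (𝓕⁻ (rK k))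

lemma fN_apply (N : ℕ) (s t : ℝ) :
    fN N (s, t) = ∑ k ∈ Finset.range N, (𝓕⁻ (bK k)) s * (𝓕⁻ (rK k)) t := by
  simp [fN]

def mS (ξ η : ℝ) : ℝ := ξ * η / (ξ ^ 2 + η ^ 2)

lemma mS_le (ξ η : ℝ) : |mS ξ η| ≤ 1 := by
  unfold mS
  rw [abs_div, abs_of_nonneg (by positivity : (0:ℝ) ≤ ξ ^ 2 + η ^ 2)]
  refine div_le_one_of_le₀ ?_ (by positivity)
  rw [abs_mul]
  nlinarith [sq_nonneg (|ξ| - |η|), sq_abs ξ, sq_abs η, sq_nonneg ξ, sq_nonneg η]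

def AK (k : ℕ) (ξ y : ℝ) : ℂ := 𝓕⁻ (fun η : ℝ => ((mS ξ η : ℝ) : ℂ) * rK k η) y

lemma fourier_lin (N : ℕ) (c : ℕ → ℂ) (w : ℕ → 𝓢(ℝ, ℂ)) (ξ : ℝ) :
    𝓕 (fun t : ℝ => ∑ k ∈ Finset.range N, c k * w k t) ξ =
      ∑ k ∈ Finset.range N, c k * (𝓕 (w k)) ξ := by
  have h : (fun t : ℝ => ∑ k ∈ Finset.range N, c k * w k t) =
      ((∑ k ∈ Finset.range N, c k • w k : 𝓢(ℝ, ℂ)) : ℝ → ℂ) := by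
    ext t; simp
  rw [h, ← fourier_coe, ← FourierTransform.fourierCLM_apply (R := ℂ), map_sum]
  simp

lemma meas_mS : Measurable (fun p : ℝ × ℝ => mS p.1 p.2) := by
  unfold mS; fun_prop

lemma integrable_m (k : ℕ) (ξ : ℝ) :
    Integrable (fun η : ℝ => ((mS ξ η : ℝ) : ℂ) * rK k η) := by
  refine (rK k).integrable.bdd_mul (c := 1) ?_ ?_
  · exact (Complex.measurable_ofReal.comp
      (meas_mS.comp (measurable_const.prodMk measurable_id))).aestronglyMeasurable
  · exact Filter.Eventually.of_forall fun η => by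
      simpa using mS_le ξ η

lemma AK_eq (k : ℕ) (ξ y : ℝ) : AK k ξ y =
    ∫ η : ℝ, Complex.exp ((2 * π * (η * y) : ℝ) * Complex.I) * (((mS ξ η : ℝ) : ℂ) * rK k η) := by
  rw [AK, Real.fourierInv_eq']
  congr 1; ext v
  simp [mul_comm]

lemma exp_meas (y : ℝ) : Continuous (fun η : ℝ => Complex.exp ((2 * π * (η * y) : ℝ) * Complex.I)) := by
  fun_prop

lemma integrable_AK (k : ℕ) (ξ y : ℝ) : Integrable (fun η : ℝ =>
    Complex.exp ((2 * π * (η * y) : ℝ) * Complex.I) * (((mS ξ η : ℝ) : ℂ) * rK k η)) := by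
  refine (integrable_m k ξ).bdd_mul (c := 1) (exp_meas y).aestronglyMeasurable ?_
  exact Filter.Eventually.of_forall fun η => by rw [Complex.norm_exp_ofReal_mul_I]

lemma fourierInv_lin (N : ℕ) (c : ℕ → ℂ) (ξ y : ℝ) :
    𝓕⁻ (fun η : ℝ => ((mS ξ η : ℝ) : ℂ) * ∑ k ∈ Finset.range N, c k * rK k η) y =
      ∑ k ∈ Finset.range N, c k * AK k ξ y := by
  rw [Real.fourierInv_eq']
  simp_rw [AK_eq, ← integral_const_mul]
  rw [← integral_finsetSum _ (fun k _ => (integrable_AK k ξ y).const_mul _)]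
  congr 1; ext v
  rw [smul_eq_mul, Finset.mul_sum, Finset.mul_sum]
  refine Finset.sum_congr rfl fun k _ => ?_
  simp [mul_comm y v]
  ring

lemma riesz_fN (N : ℕ) (x y : ℝ) : doubleRiesz (fun s t => fN N (s, t)) x y =
    𝓕⁻ (fun ξ : ℝ => ∑ k ∈ Finset.range N, bK k ξ * AK k ξ y) x := by
  unfold doubleRiesz
  simp_rw [fN_apply]
  refine congrArg (fun g : ℝ → ℂ => 𝓕⁻ g x) (funext fun ξ => ?_)
  rw [← fourierInv_lin]
  refine congrArg (fun g : ℝ → ℂ => 𝓕⁻ g y) (funext fun η => ?_)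
  simp_rw [fourier_lin, FourierTransform.fourier_fourierInv_eq]
  rw [mS]
  congr 1
  have := fourier_lin N (fun k => rK k η) (fun k => 𝓕⁻ (bK k)) ξ
  simp_rw [FourierTransform.fourier_fourierInv_eq, mul_comm (rK _ η)] at this
  exact this

lemma AK_norm (k : ℕ) (ξ y : ℝ) : ‖AK k ξ y‖ ≤ ∫ η, ‖rK k η‖ := by
  rw [AK_eq]
  refine (norm_integral_le_integral_norm _).trans ?_
  refine integral_mono (integrable_AK k ξ y).norm (rK k).integrable.norm fun η => ?_
  simp only [norm_mul, Complex.norm_exp_ofReal_mul_I, one_mul]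
  refine mul_le_of_le_one_left (norm_nonneg _) ?_
  simpa using mS_le ξ η

lemma AK_meas (k : ℕ) (y : ℝ) : StronglyMeasurable (fun ξ => AK k ξ y) := by
  simp_rw [AK_eq]
  refine StronglyMeasurable.integral_prod_right (f := fun ξ η : ℝ => Complex.exp ((2 * π * (η * y) : ℝ) * Complex.I) * (((mS ξ η : ℝ) : ℂ) * rK k η)) ?_
  refine Measurable.stronglyMeasurable ?_
  refine ((exp_meas y).measurable.comp measurable_snd).mul ?_
  exact (Complex.measurable_ofReal.comp meas_mS).mul ((rK k).continuous.measurable.comp measurable_snd)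

def GN (N : ℕ) (y ξ : ℝ) : ℂ := ∑ k ∈ Finset.range N, bK k ξ * AK k ξ y

lemma GN_integrable (N : ℕ) (y : ℝ) : Integrable (GN N y) := by
  unfold GN
  refine integrable_finsetSum _ fun k _ => ?_
  exact (bK k).integrable.mul_bdd (c := ∫ η, ‖rK k η‖) (AK_meas k y).aestronglyMeasurable
    (Filter.Eventually.of_forall fun ξ => AK_norm k ξ y)

def hS (η : ℝ) : ℝ := η ^ 2 * chiB η / 8

lemma hS_cont : Continuous hS := by
  unfold hS
  exact ((continuous_pow 2).mul chiB.continuous).div_const 8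

lemma hS_comp : HasCompactSupport hS := by
  have : hS = (fun η : ℝ => η ^ 2 / 8) * (fun η => chiB η) := by ext; simp [hS]; ring
  rw [this]
  exact chiB.hasCompactSupport.mul_left

lemma hS_pos : 0 < ∫ η, hS η := by
  refine hS_cont.integral_pos_of_hasCompactSupport_nonneg_nonzero (x := 1/4) hS_comp ?_ ?_
  · intro η; have := chiB.nonneg (x := η); simp only [hS, Pi.zero_apply]; positivity
  · have : chiB (1/4 : ℝ) = 1 := chiB.one_of_mem_closedBall (by
      simp [chiB]; norm_num)
    simp [hS]
    rw [show (4:ℝ)⁻¹ = 1/4 by norm_num, this]; norm_num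

lemma chiB_zero {η : ℝ} (h : 1 ≤ |η|) : chiB η = 0 :=
  chiB.zero_of_le_dist (by simpa [chiB] using h)

lemma betaB_zero {η : ℝ} (h : 1/4 ≤ |η|) : betaB η = 0 :=
  betaB.zero_of_le_dist (by simpa [betaB] using h)

lemma AK_re (k : ℕ) (ξ y : ℝ) : (AK k ξ y).re = ∫ η : ℝ, Real.cos (2 * π * (η * y)) *
    (mS ξ η * (((2 : ℝ) ^ k)⁻¹ * ((η * (2 ^ k)⁻¹) * chiB (η * (2 ^ k)⁻¹)))) := by
  rw [AK_eq, ← RCLike.re_eq_complex_re, ← integral_re (integrable_AK k ξ y)]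
  congr 1; ext η
  rw [rK_apply, ← Complex.ofReal_mul, RCLike.re_eq_complex_re, Complex.re_mul_ofReal,
    Complex.exp_ofReal_mul_I_re]

lemma AK_int_re (k : ℕ) (ξ y : ℝ) : Integrable fun η : ℝ => Real.cos (2 * π * (η * y)) *
    (mS ξ η * (((2 : ℝ) ^ k)⁻¹ * ((η * (2 ^ k)⁻¹) * chiB (η * (2 ^ k)⁻¹)))) := by
  refine (integrable_AK k ξ y).re.congr (Filter.Eventually.of_forall fun η => ?_)
  simp only
  rw [rK_apply, ← Complex.ofReal_mul, RCLike.re_eq_complex_re, Complex.re_mul_ofReal,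
    Complex.exp_ofReal_mul_I_re]

lemma cos_half {η y : ℝ} {k : ℕ} (hy : |y| * 2 ^ k ≤ 1 / 6) (h : |η * (2 ^ k)⁻¹| < 1) :
    1 / 2 ≤ Real.cos (2 * π * (η * y)) := by
  have hp : (0:ℝ) < 2 ^ k := by positivity
  have h1 : |2 * π * (η * y)| ≤ π / 3 := by
    have : 2 * π * (η * y) = (2 * π) * ((η * (2 ^ k)⁻¹) * (y * 2 ^ k)) := by field_simp
    rw [this, abs_mul (2 * π), abs_mul (η * _), abs_mul y, abs_of_pos hp, abs_of_pos (by positivity : 0 < 2 * π)]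
    have : |η * (2 ^ k)⁻¹| * (|y| * 2 ^ k) ≤ 1 * (1/6) := by gcongr
    nlinarith [Real.pi_pos]
  rw [← Real.cos_abs, ← Real.cos_pi_div_three]
  exact Real.cos_le_cos_of_nonneg_of_le_pi (abs_nonneg _) (by linarith [Real.pi_pos]) h1

lemma AK_re_nonneg {k : ℕ} {ξ y : ℝ} (hξ : 0 ≤ ξ) (hy : |y| * 2 ^ k ≤ 1 / 6) :
    0 ≤ (AK k ξ y).re := by
  rw [AK_re]
  refine integral_nonneg fun η => ?_
  simp only [Pi.zero_apply]
  by_cases h : |η * (2 ^ k)⁻¹| < 1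
  · have := cos_half hy h
    have hc := chiB.nonneg (x := η * (2 ^ k)⁻¹)
    have : mS ξ η * (((2 : ℝ) ^ k)⁻¹ * ((η * (2 ^ k)⁻¹) * chiB (η * (2 ^ k)⁻¹))) =
      ξ * (η ^ 2) / (ξ ^ 2 + η ^ 2) * ((2 : ℝ) ^ k)⁻¹ ^ 2 * chiB (η * (2 ^ k)⁻¹) := by
      unfold mS; ring
    rw [this]; positivity
  · rw [chiB_zero (not_lt.mp h)]; simp

lemma AK_re_lower {k : ℕ} {ξ y : ℝ} (h1 : 3 / 4 * 2 ^ k ≤ ξ) (h2 : ξ ≤ 5 / 4 * 2 ^ k)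
    (hy : |y| * 2 ^ k ≤ 1 / 6) : ∫ η, hS η ≤ (AK k ξ y).re := by
  rw [AK_re]
  have hp : (0:ℝ) < 2 ^ k := by positivity
  have e := Measure.integral_comp_mul_right hS (((2 : ℝ) ^ k)⁻¹)
  rw [inv_inv, abs_of_pos hp, smul_eq_mul] at e
  have e2 : ∫ η, hS η = ∫ η, ((2 : ℝ) ^ k)⁻¹ * hS (η * (2 ^ k)⁻¹) := by
    rw [integral_const_mul, e]; field_simp
  rw [e2]
  refine integral_mono ?_ (AK_int_re k ξ y) fun η => ?_
  · exact ((hS_cont.integrable_of_hasCompactSupport hS_comp).comp_mul_right' (by positivity)).const_mul _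
  simp only
  by_cases h : |η * (2 ^ k)⁻¹| < 1
  · have hc := cos_half hy h
    have hc' := chiB.nonneg (x := η * (2 ^ k)⁻¹)
    obtain ⟨a, rfl⟩ : ∃ a, ξ = a * 2 ^ k := ⟨ξ / 2 ^ k, by field_simp⟩
    obtain ⟨z, rfl⟩ : ∃ z, η = z * 2 ^ k := ⟨η / 2 ^ k, by field_simp⟩
    have a1 : 3/4 ≤ a := le_of_mul_le_mul_right h1 hp
    have a2 : a ≤ 5/4 := le_of_mul_le_mul_right h2 hp
    rw [mul_assoc, mul_inv_cancel₀ hp.ne', mul_one] at h hc' ⊢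
    have hm : mS (a * 2 ^ k) (z * 2 ^ k) = a * z / (a ^ 2 + z ^ 2) := by
      unfold mS
      have : a ^ 2 + z ^ 2 ≠ 0 := by positivity
      field_simp
    have hz : z ^ 2 ≤ 1 := (sq_le_one_iff_abs_le_one z).mpr h.le
    have hq : 1 / 4 ≤ a / (a ^ 2 + z ^ 2) := by
      rw [div_le_div_iff₀ (by norm_num) (by positivity)]
      nlinarith
    have : hS z ≤ 1 / 2 * (a / (a ^ 2 + z ^ 2) * (z ^ 2 * chiB z)) := by
      unfold hS
      have := mul_le_mul_of_nonneg_right hq (mul_nonneg (sq_nonneg z) hc')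
      linarith
    calc _ ≤ ((2:ℝ) ^ k)⁻¹ * (1 / 2 * (a / (a ^ 2 + z ^ 2) * (z ^ 2 * chiB z))) := by gcongr
      _ ≤ ((2:ℝ) ^ k)⁻¹ * (cos (2 * π * (z * 2 ^ k * y)) * (a / (a ^ 2 + z ^ 2) * (z ^ 2 * chiB z))) := by
        gcongr
      _ = _ := by rw [hm]; ring
  · rw [hS, chiB_zero (not_lt.mp h)]; simp

def BN (N : ℕ) : 𝓢(ℝ, ℂ) := ∑ k ∈ Finset.range N, bK k

def BR (N : ℕ) (ξ : ℝ) : ℝ := ∑ k ∈ Finset.range N, betaB (ξ - 2 ^ k)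

lemma BN_apply (N : ℕ) (ξ : ℝ) : BN N ξ = (BR N ξ : ℂ) := by
  simp [BN, BR, bK_apply]

lemma BR_nonneg (N : ℕ) (ξ : ℝ) : 0 ≤ BR N ξ :=
  Finset.sum_nonneg fun _ _ => betaB.nonneg

lemma betaB_near {ξ : ℝ} {k : ℕ} (h : betaB (ξ - 2 ^ k) ≠ 0) : |ξ - 2 ^ k| < 1 / 4 := by
  by_contra h'
  exact h (betaB_zero (not_lt.mp h'))

lemma BR_le_one (N : ℕ) (ξ : ℝ) : BR N ξ ≤ 1 := by
  unfold BR
  by_cases h : ∃ k ∈ Finset.range N, betaB (ξ - 2 ^ k) ≠ 0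
  · obtain ⟨k, hk, hk'⟩ := h
    rw [Finset.sum_eq_single_of_mem k hk]
    · exact betaB.le_one
    · intro j _ hj
      by_contra hj'
      have e1 := abs_lt.mp (betaB_near hk')
      have e2 := abs_lt.mp (betaB_near hj')
      have : ((2 ^ j : ℕ) : ℤ) ≠ ((2 ^ k : ℕ) : ℤ) := by
        exact_mod_cast fun h => hj (Nat.pow_right_injective le_rfl h)
      have h1 : |((2 ^ j : ℕ) : ℤ) - ((2 ^ k : ℕ) : ℤ)| < 1 := by
        have : |(2 : ℝ) ^ j - 2 ^ k| < 1 := abs_lt.mpr ⟨by linarith [e1.1, e2.2], by linarith [e1.2, e2.1]⟩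
        exact_mod_cast this
      exact this (by linarith [Int.abs_lt_one_iff.mp h1])
  · push Not at h
    rw [Finset.sum_eq_zero h]; norm_num

lemma beta_int : Integrable (fun ξ : ℝ => betaB ξ) :=
  betaB.continuous.integrable_of_hasCompactSupport betaB.hasCompactSupport

lemma beta_sq_int : Integrable (fun ξ : ℝ => betaB ξ ^ 2) := by
  simp_rw [sq]
  refine (betaB.continuous.mul betaB.continuous).integrable_of_hasCompactSupport ?_
  exact betaB.hasCompactSupport.mul_left (f := fun x : ℝ => betaB x)

lemma BR_integral (N : ℕ) : Integrable (BR N) ∧ ∫ ξ, BR N ξ = N * ∫ ξ, betaB ξ := by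
  have hi : ∀ k ∈ Finset.range N, Integrable (fun ξ : ℝ => betaB (ξ - 2 ^ k)) :=
    fun k _ => beta_int.comp_sub_right _
  refine ⟨integrable_finsetSum _ hi, ?_⟩
  unfold BR
  rw [integral_finsetSum _ hi]
  simp_rw [integral_sub_right_eq_self (fun ξ : ℝ => betaB ξ)]
  simp

lemma BN_norm (N : ℕ) : eLpNorm (BN N) 2 volume ≤ ENNReal.ofReal (√(N * ∫ ξ, betaB ξ)) := by
  have h := MemLp.eLpNorm_eq_integral_rpow_norm (p := 2) (by norm_num) (by norm_num)
    ((BN N).memLp 2 volume)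
  rw [h]
  refine ENNReal.ofReal_le_ofReal ?_
  rw [Real.sqrt_eq_rpow]
  simp only [ENNReal.toReal_ofNat]
  rw [show ((2:ℝ)⁻¹) = 1 / 2 by norm_num]
  refine Real.rpow_le_rpow (integral_nonneg fun _ => by positivity) ?_ (by norm_num)
  rw [← (BR_integral N).2]
  refine integral_mono_of_nonneg (Filter.Eventually.of_forall fun _ => by positivity)
    (BR_integral N).1 (Filter.Eventually.of_forall fun ξ => ?_)
  simp only
  rw [BN_apply, Complex.norm_real, Real.norm_of_nonneg (BR_nonneg N ξ), Real.rpow_two]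
  nlinarith [BR_nonneg N ξ, BR_le_one N ξ]

lemma GB_re {N : ℕ} {y : ℝ} (hy : |y| * 2 ^ N ≤ 1 / 6) (ξ : ℝ) :
    ∑ k ∈ Finset.range N, (∫ η, hS η) * betaB (ξ - 2 ^ k) ^ 2 ≤ (GN N y ξ * BN N ξ).re := by
  rw [BN_apply, Complex.re_mul_ofReal, GN, Complex.re_sum, Finset.sum_mul]
  refine Finset.sum_le_sum fun k hk => ?_
  rw [bK_apply, Complex.re_ofReal_mul]
  by_cases h : betaB (ξ - 2 ^ k) = 0
  · simp [h]
  have hn := betaB_near h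
  have h1 : (1:ℝ) ≤ 2 ^ k := one_le_pow₀ (by norm_num)
  rw [abs_lt] at hn
  have hyk : |y| * 2 ^ k ≤ 1 / 6 := by
    refine le_trans ?_ hy
    have : (2:ℝ) ^ k ≤ 2 ^ N := pow_le_pow_right₀ (by norm_num) (Finset.mem_range.mp hk).le
    gcongr
  have hA := AK_re_lower (k := k) (ξ := ξ) (y := y) (by linarith) (by linarith) hyk
  have hb := betaB.nonneg (x := ξ - 2 ^ k)
  have hB : betaB (ξ - 2 ^ k) ≤ BR N ξ :=
    Finset.single_le_sum (f := fun k => betaB (ξ - 2 ^ k)) (fun _ _ => betaB.nonneg) hk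
  have hA0 := hS_pos.le.trans hA
  calc _ = betaB (ξ - 2 ^ k) * (∫ η, hS η) * betaB (ξ - 2 ^ k) := by ring
    _ ≤ _ := by gcongr

lemma GB_integrable (N : ℕ) (y : ℝ) : Integrable (fun ξ => GN N y ξ * BN N ξ) := by
  refine (GN_integrable N y).mul_bdd (c := 1) (BN N).continuous.aestronglyMeasurable
    (Filter.Eventually.of_forall fun ξ => ?_)
  rw [BN_apply, Complex.norm_real, Real.norm_of_nonneg (BR_nonneg N ξ)]
  exact BR_le_one N ξ

lemma GB_lower {N : ℕ} {y : ℝ} (hy : |y| * 2 ^ N ≤ 1 / 6) :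
    N * ((∫ η, hS η) * ∫ ξ, betaB ξ ^ 2) ≤ ‖∫ ξ, GN N y ξ * BN N ξ‖ := by
  refine le_trans ?_ (Complex.re_le_norm _)
  rw [← RCLike.re_eq_complex_re, ← integral_re (GB_integrable N y)]
  have hi : ∀ k ∈ Finset.range N,
      Integrable (fun ξ : ℝ => (∫ η, hS η) * betaB (ξ - 2 ^ k) ^ 2) :=
    fun k _ => (beta_sq_int.comp_sub_right _).const_mul _
  have : ∫ ξ, ∑ k ∈ Finset.range N, (∫ η, hS η) * betaB (ξ - 2 ^ k) ^ 2 =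
      N * ((∫ η, hS η) * ∫ ξ, betaB ξ ^ 2) := by
    rw [integral_finsetSum _ hi]
    simp_rw [integral_const_mul, integral_sub_right_eq_self (fun ξ : ℝ => betaB ξ ^ 2)]
    simp
  rw [← this]
  exact integral_mono (integrable_finsetSum _ hi) (GB_integrable N y).re (GB_re hy)

lemma pairing_eq (G : ℝ → ℂ) (hG : Integrable G) (B : 𝓢(ℝ, ℂ)) :
    ∫ x, (𝓕⁻ B) (-x) * 𝓕⁻ G x = ∫ ξ, G ξ * B ξ := by
  have h1 : ∀ x, (𝓕⁻ B) (-x) * 𝓕⁻ G x = (fun x => 𝓕 G x * (𝓕⁻ B : 𝓢(ℝ, ℂ)) x) (-x) := by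
    intro x; simp only; rw [Real.fourierInv_eq_fourier_neg, mul_comm]
  rw [integral_congr_ae (Filter.Eventually.of_forall h1),
    integral_neg_eq_self (fun x => 𝓕 G x * (𝓕⁻ B : 𝓢(ℝ, ℂ)) x)]
  have h2 := VectorFourier.integral_fourierIntegral_smul_eq_flip (μ := volume) (ν := volume)
    (L := innerₗ ℝ) (f := G) (g := ((𝓕⁻ B : 𝓢(ℝ, ℂ)) : ℝ → ℂ)) Real.continuous_fourierChar continuous_inner hG
    (𝓕⁻ B : 𝓢(ℝ, ℂ)).integrable
  have h3 : ∀ ξ, B ξ = 𝓕 ((𝓕⁻ B : 𝓢(ℝ, ℂ)) : ℝ → ℂ) ξ := by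
    intro ξ
    rw [← fourier_coe, FourierTransform.fourier_fourierInv_eq]
  simp_rw [h3]
  simp only [flip_innerₗ, smul_eq_mul] at h2
  exact h2

lemma inv_norm (B : 𝓢(ℝ, ℂ)) : eLpNorm (fun x => (𝓕⁻ B) (-x)) 2 volume = eLpNorm B 2 volume := by
  have h := eLpNorm_comp_measurePreserving (p := 2) (g := (𝓕⁻ B : 𝓢(ℝ, ℂ)))
    (𝓕⁻ B).continuous.aestronglyMeasurable (Measure.measurePreserving_neg (volume : Measure ℝ))
  refine Eq.trans h ?_
  have h2 := norm_fourier_toL2_eq (𝓕⁻ B)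
  rw [FourierTransform.fourier_fourierInv_eq, norm_toLp, norm_toLp] at h2
  exact ((ENNReal.toReal_eq_toReal_iff' ((B).eLpNorm_lt_top 2 volume).ne
    ((𝓕⁻ B).eLpNorm_lt_top 2 volume).ne).mp h2).symm

lemma dual_bound (G : ℝ → ℂ) (hG : Integrable G) (B : 𝓢(ℝ, ℂ)) :
    ‖∫ ξ, G ξ * B ξ‖ₑ ≤ eLpNorm B 2 volume * eLpNorm (𝓕⁻ G) 2 volume := by
  have hc : Continuous (𝓕⁻ G) := by
    rw [Real.fourierInv_eq_fourier_comp_neg]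
    exact VectorFourier.fourierIntegral_continuous Real.continuous_fourierChar continuous_inner
      (hG.comp_neg)
  rw [← pairing_eq G hG B, ← inv_norm B]
  have hm : Continuous (fun x : ℝ => (𝓕⁻ B : 𝓢(ℝ, ℂ)) (-x)) :=
    (𝓕⁻ B : 𝓢(ℝ, ℂ)).continuous.comp continuous_neg
  obtain ⟨p, hp⟩ : ∃ p : ℝ → ℂ, p = fun x : ℝ => (𝓕⁻ B : 𝓢(ℝ, ℂ)) (-x) := ⟨_, rfl⟩
  have hp' : ∀ x, (𝓕⁻ B : 𝓢(ℝ, ℂ)) (-x) = p x := fun x => by rw [hp]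
  rw [← hp] at hm ⊢
  simp_rw [hp']
  revert hc
  generalize 𝓕⁻ G = q
  intro hc
  have hol := eLpNorm_smul_le_mul_eLpNorm (p := 2) (q := 2) (r := 1) (μ := volume)
    hc.aestronglyMeasurable hm.aestronglyMeasurable
  refine le_trans (enorm_integral_le_lintegral_enorm _) (le_trans (le_of_eq ?_) hol)
  rw [eLpNorm_one_eq_lintegral_enorm]
  rfl

lemma lower_main {N : ℕ} {y : ℝ} (hy : |y| * 2 ^ N ≤ 1 / 6) :
    ENNReal.ofReal (N * ((∫ η, hS η) * ∫ ξ, betaB ξ ^ 2)) ≤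
      ENNReal.ofReal (√(N * ∫ ξ, betaB ξ)) *
      eLpNorm (fun x : ℝ => doubleRiesz (fun s t => fN N (s, t)) x y) 2 volume := by
  have e : (fun x : ℝ => doubleRiesz (fun s t => fN N (s, t)) x y) = 𝓕⁻ (GN N y) := by
    ext x; rw [riesz_fN]; rfl
  rw [e]
  refine (ENNReal.ofReal_le_ofReal (GB_lower hy)).trans ?_
  rw [ofReal_norm]
  refine (dual_bound _ (GN_integrable N y) (BN N)).trans ?_
  exact mul_le_mul_left (BN_norm N) _

lemma upper_main : ∃ K : ℝ, 0 ≤ K ∧ ∀ N : ℕ, eLpNorm (fun x : ℝ =>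
    (essSup (fun y : ℝ => (‖fN N (x, y)‖₊ : ℝ≥0∞)) volume).toReal) 2 volume ≤
      ENNReal.ofReal K := by
  obtain ⟨M, hM, h⟩ := psi_sum
  refine ⟨M * (eLpNorm (𝓕⁻ bS : 𝓢(ℝ, ℂ)) 2 volume).toReal, by positivity, fun N => ?_⟩
  rw [ENNReal.ofReal_mul hM, ENNReal.ofReal_toReal ((𝓕⁻ bS).eLpNorm_lt_top 2 volume).ne]
  refine eLpNorm_le_mul_eLpNorm_of_ae_le_mul (Filter.Eventually.of_forall fun x => ?_) 2
  rw [Real.norm_of_nonneg ENNReal.toReal_nonneg]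
  refine ENNReal.toReal_le_of_le_ofReal (by positivity) ?_
  refine essSup_le_of_ae_le _ (Filter.Eventually.of_forall fun y => ?_)
  simp only
  rw [← enorm_eq_nnnorm, ← ofReal_norm]
  refine ENNReal.ofReal_le_ofReal ?_
  rw [fN_apply]
  refine (norm_sum_le _ _).trans ?_
  simp_rw [norm_mul, norm_bK]
  rw [← Finset.mul_sum, mul_comm]
  gcongr
  exact h N y

lemma beta_sq_pos : 0 < ∫ ξ, betaB ξ ^ 2 := by
  refine (betaB.continuous.pow 2).integral_pos_of_hasCompactSupport_nonneg_nonzero (x := 0)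
    (betaB.hasCompactSupport.comp_left (g := fun x : ℝ => x ^ 2) (by simp)) ?_ ?_
  · intro η; simp only [Pi.zero_apply]; positivity
  · have : betaB (0 : ℝ) = 1 := betaB.one_of_mem_closedBall (by simp [betaB])
    simp [this]

end RieszAux

/-- There is no constant `C` such that
`‖‖R₁₂f(x,y)‖_{L²_x}‖_{L^∞_y} ≤ C ‖‖f(x,y)‖_{L^∞_y}‖_{L²_x}` for all Schwartz `f` on `ℝ²`. -/
theorem no_mixed_norm_estimate_L2 :
    ¬ ∃ C : ℝ, ∀ f : 𝓢(ℝ × ℝ, ℂ),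
      essSup (fun y : ℝ =>
          eLpNorm (fun x : ℝ => doubleRiesz (fun s t => f (s, t)) x y) 2 volume) volume ≤
        ENNReal.ofReal C *
          eLpNorm (fun x : ℝ =>
            (essSup (fun y : ℝ => (‖f (x, y)‖₊ : ℝ≥0∞)) volume).toReal) 2 volume := by
  rintro ⟨C, hC⟩
  obtain ⟨K, hK, hup⟩ := upper_main
  set c := (∫ η, hS η) * ∫ ξ, betaB ξ ^ 2 with hc
  have hcpos : 0 < c := mul_pos hS_pos beta_sq_pos
  set β := ∫ ξ, betaB ξ with hβ
  have key : ∀ N : ℕ, N * c ≤ √(N * β) * (max C 0 * K) := by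
    intro N
    have h1 := hC (fN N)
    have h2 := h1.trans (mul_le_mul_right (hup N) _)
    have hae := ENNReal.ae_le_essSup (μ := (volume : Measure ℝ)) (fun y : ℝ =>
          eLpNorm (fun x : ℝ => doubleRiesz (fun s t => fN N (s, t)) x y) 2 volume)
    have hex : ∃ y : ℝ, |y| * 2 ^ N ≤ 1 / 6 ∧
        eLpNorm (fun x : ℝ => doubleRiesz (fun s t => fN N (s, t)) x y) 2 volume ≤
        ENNReal.ofReal C * ENNReal.ofReal K := by
      by_contra hne
      push Not at hne
      have h0 : volume (Set.Icc (0:ℝ) (1 / 6 / 2 ^ N)) = 0 := by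
        refine measure_mono_null ?_ hae
        intro y hy
        have := hne y (by
          rw [abs_of_nonneg hy.1, ← le_div_iff₀ (by positivity)]; exact hy.2)
        simp only [Set.mem_compl_iff, Set.mem_ofPred_eq, not_le]
        exact h2.trans_lt this
      rw [Real.volume_Icc, ENNReal.ofReal_eq_zero] at h0
      have : (0:ℝ) < 1 / 6 / 2 ^ N := by positivity
      linarith
    obtain ⟨y, hy, hle⟩ := hex
    have h3 := (lower_main hy).trans (mul_le_mul_right hle _)
    have h4 : ENNReal.ofReal C = ENNReal.ofReal (max C 0) := by simp [ENNReal.ofReal, Real.toNNReal]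
    rw [h4, ← ENNReal.ofReal_mul (le_max_right _ _), ← ENNReal.ofReal_mul (Real.sqrt_nonneg _)] at h3
    exact (ENNReal.ofReal_le_ofReal_iff (by positivity)).mp h3
  obtain ⟨n, hn⟩ := exists_nat_gt (√β * (max C 0 * K) / c)
  rw [div_lt_iff₀ hcpos] at hn
  have hnpos : (0:ℝ) < n := by
    have : 0 ≤ √β * (max C 0 * K) := by positivity
    by_contra h
    have : (n:ℝ) * c ≤ 0 := mul_nonpos_of_nonpos_of_nonneg (not_lt.mp h) hcpos.le
    linarith
  have hk := key (n ^ 2)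
  push_cast at hk
  rw [Real.sqrt_mul (by positivity), Real.sqrt_sq hnpos.le] at hk
  have : (n:ℝ) * (n * c) ≤ n * (√β * (max C 0 * K)) := by linarith
  exact absurd (le_of_mul_le_mul_left this hnpos) (not_le.mpr hn)
end

section
/- For every p ≥ 2 there is no constant C_p such that ‖‖R₁₂ f(x,y)‖_{L^p_x}‖_{L^∞_y} ≤ C_p ‖‖f(x,y)‖_{L^∞_y}‖_{L^p_x} for all Schwartz functions f on ℝ². -/
open MeasureTheory FourierTransform Real SchwartzMap
open scoped ENNReal

lemma fourier_lincomb (S : Finset ℕ) (c d : ℕ → ℂ) (a b : ℕ → 𝓢(ℝ, ℂ)) (ξ : ℝ) :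
    𝓕 (fun s : ℝ => ∑ k ∈ S, (c k * a k s + d k * b k s)) ξ =
      ∑ k ∈ S, (c k * (𝓕 (a k)) ξ + d k * (𝓕 (b k)) ξ) := by
  have h : (fun s : ℝ => ∑ k ∈ S, (c k * a k s + d k * b k s)) =
      ⇑(∑ k ∈ S, (c k • a k + d k • b k) : 𝓢(ℝ, ℂ)) := by
    ext s; simp
  rw [h, ← SchwartzMap.fourier_coe]
  have h2 := map_sum (FourierTransform.fourierCLE ℂ 𝓢(ℝ, ℂ)) (fun k => c k • a k + d k • b k) S
  simp only [FourierTransform.fourierCLE_apply] at h2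
  rw [h2]
  simp [FourierTransform.fourier_add, FourierTransform.fourier_smul]

lemma fourierInv_lincomb (S : Finset ℕ) (c : ℕ → ℂ) (a : ℕ → 𝓢(ℝ, ℂ)) (ξ : ℝ) :
    𝓕⁻ (fun s : ℝ => ∑ k ∈ S, (c k * (𝓕 (a k)) s)) ξ =
      ∑ k ∈ S, (c k * a k ξ) := by
  have h : (fun s : ℝ => ∑ k ∈ S, (c k * (𝓕 (a k)) s)) =
      ⇑(𝓕 (∑ k ∈ S, (c k • a k) : 𝓢(ℝ, ℂ)) : 𝓢(ℝ, ℂ)) := by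
    have h2 := map_sum (FourierTransform.fourierCLE ℂ 𝓢(ℝ, ℂ)) (fun k => c k • a k) S
    simp only [FourierTransform.fourierCLE_apply] at h2
    rw [h2]
    ext s; simp [FourierTransform.fourier_smul]
  rw [h, ← SchwartzMap.fourierInv_coe, FourierTransform.fourierInv_fourier_eq]
  simp

lemma fourier_derivCLM (a : 𝓢(ℝ, ℂ)) (ξ : ℝ) :
    𝓕 (derivCLM ℂ ℂ a) ξ = 2 * π * Complex.I * ξ * (𝓕 a) ξ := by
  have h := Real.fourier_deriv (f := a) a.integrable a.differentiable
    ((derivCLM ℂ ℂ a).integrable)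
  have h2 := congrFun h ξ
  rw [SchwartzMap.fourier_coe, SchwartzMap.fourier_coe]
  rw [smul_eq_mul] at h2
  exact h2

lemma doubleRiesz_eq (S : Finset ℕ) (a b : ℕ → 𝓢(ℝ, ℂ)) (x y : ℝ) :
    doubleRiesz (fun s t => ∑ k ∈ S, (derivCLM ℂ ℂ (derivCLM ℂ ℂ (a k)) s * b k t +
      a k s * derivCLM ℂ ℂ (derivCLM ℂ ℂ (b k)) t)) x y =
    ∑ k ∈ S, derivCLM ℂ ℂ (a k) x * derivCLM ℂ ℂ (b k) y := by
  unfold doubleRiesz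
  have h1 : ∀ ξ₁ ξ₂ : ℝ, ((ξ₁ * ξ₂ / (ξ₁ ^ 2 + ξ₂ ^ 2) : ℝ) : ℂ) *
      𝓕 (fun s : ℝ => 𝓕 (fun t : ℝ => ∑ k ∈ S, (derivCLM ℂ ℂ (derivCLM ℂ ℂ (a k)) s * b k t +
      a k s * derivCLM ℂ ℂ (derivCLM ℂ ℂ (b k)) t)) ξ₂) ξ₁ =
      ∑ k ∈ S, 𝓕 (derivCLM ℂ ℂ (a k)) ξ₁ * 𝓕 (derivCLM ℂ ℂ (b k)) ξ₂ := by
    intro ξ₁ ξ₂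
    have e : (fun s : ℝ => 𝓕 (fun t : ℝ => ∑ k ∈ S, (derivCLM ℂ ℂ (derivCLM ℂ ℂ (a k)) s * b k t +
      a k s * derivCLM ℂ ℂ (derivCLM ℂ ℂ (b k)) t)) ξ₂) = fun s : ℝ =>
        ∑ k ∈ S, (𝓕 (b k) ξ₂ * derivCLM ℂ ℂ (derivCLM ℂ ℂ (a k)) s +
          𝓕 (derivCLM ℂ ℂ (derivCLM ℂ ℂ (b k))) ξ₂ * a k s) := by
      ext s
      rw [fourier_lincomb S (fun k => derivCLM ℂ ℂ (derivCLM ℂ ℂ (a k)) s) (fun k => a k s) b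
        (fun k => derivCLM ℂ ℂ (derivCLM ℂ ℂ (b k)))]
      refine Finset.sum_congr rfl fun k _ => ?_
      ring
    rw [e, fourier_lincomb S (fun k => 𝓕 (b k) ξ₂)
      (fun k => 𝓕 (derivCLM ℂ ℂ (derivCLM ℂ ℂ (b k))) ξ₂)
      (fun k => derivCLM ℂ ℂ (derivCLM ℂ ℂ (a k))) a, Finset.mul_sum]
    refine Finset.sum_congr rfl fun k _ => ?_
    simp only [fourier_derivCLM]
    by_cases hz : ξ₁ ^ 2 + ξ₂ ^ 2 = 0
    · have : ξ₁ = 0 := by nlinarith [sq_nonneg ξ₁, sq_nonneg ξ₂]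
      simp [this]
    · have hz' : (ξ₁ : ℂ) ^ 2 + (ξ₂ : ℂ) ^ 2 ≠ 0 := by exact_mod_cast hz
      push_cast
      field_simp
  simp_rw [h1]
  have h2 : ∀ ξ₁ : ℝ, 𝓕⁻ (fun ξ₂ : ℝ =>
      ∑ k ∈ S, 𝓕 (derivCLM ℂ ℂ (a k)) ξ₁ * 𝓕 (derivCLM ℂ ℂ (b k)) ξ₂) y =
      ∑ k ∈ S, derivCLM ℂ ℂ (b k) y * 𝓕 (derivCLM ℂ ℂ (a k)) ξ₁ := by
    intro ξ₁
    rw [fourierInv_lincomb S (fun k => 𝓕 (derivCLM ℂ ℂ (a k)) ξ₁) (fun k => derivCLM ℂ ℂ (b k))]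
    exact Finset.sum_congr rfl fun k _ => mul_comm _ _
  simp_rw [h2]
  rw [fourierInv_lincomb S (fun k => derivCLM ℂ ℂ (b k) y) (fun k => derivCLM ℂ ℂ (a k))]
  exact Finset.sum_congr rfl fun k _ => mul_comm _ _
lemma lacunary_integral (N : ℕ) :
    ∫ x in Set.Ioc (0:ℝ) (2 * π), ‖∑ k ∈ Finset.range N, Complex.I *
      Complex.exp (2 ^ k * Complex.I * x)‖ ^ 2 = 2 * π * N := by
  rw [← intervalIntegral.integral_of_le (by positivity)]
  have key : ∀ x : ℝ, ((‖∑ k ∈ Finset.range N, Complex.I *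
      Complex.exp (2 ^ k * Complex.I * x)‖ ^ 2 : ℝ) : ℂ) =
      ∑ j ∈ Finset.range N, ∑ k ∈ Finset.range N,
        Complex.exp ((2 ^ j - 2 ^ k) * Complex.I * x) := by
    intro x
    rw [← Finset.mul_sum, norm_mul, Complex.norm_I, one_mul, Complex.ofReal_pow,
      ← Complex.mul_conj', map_sum, Finset.sum_mul_sum]
    refine Finset.sum_congr rfl fun j _ => Finset.sum_congr rfl fun k _ => ?_
    rw [← Complex.exp_conj, ← Complex.exp_add]
    congr 1
    simp only [map_mul, map_pow, Complex.conj_I, Complex.conj_ofReal, Complex.conj_ofNat]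
    ring
  have hc : ((∫ x in (0:ℝ)..(2 * π), ‖∑ k ∈ Finset.range N, Complex.I *
      Complex.exp (2 ^ k * Complex.I * x)‖ ^ 2 : ℝ) : ℂ) = ((2 * π * N : ℝ) : ℂ) := by
    rw [← intervalIntegral.integral_ofReal]
    simp_rw [key]
    rw [intervalIntegral.integral_finsetSum
      (fun j _ => Continuous.intervalIntegrable (by fun_prop) _ _)]
    have : ∀ j ∈ Finset.range N, (∫ x in (0:ℝ)..(2 * π), ∑ k ∈ Finset.range N,
        Complex.exp ((2 ^ j - 2 ^ k) * Complex.I * x)) = 2 * π := by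
      intro j hj
      rw [intervalIntegral.integral_finsetSum
        (fun j _ => Continuous.intervalIntegrable (by fun_prop) _ _)]
      rw [Finset.sum_eq_single_of_mem j hj]
      · simp
      · intro k _ hk
        have hne : ((2:ℂ) ^ j - 2 ^ k) ≠ 0 := by
          rw [sub_ne_zero]
          intro h
          have h' : (2:ℕ) ^ j = 2 ^ k := by exact_mod_cast h
          exact hk (Nat.pow_right_injective (le_refl 2) h').symm
        rw [integral_exp_mul_complex (mul_ne_zero hne Complex.I_ne_zero)]
        have e1 : Complex.exp (((2:ℂ) ^ j - 2 ^ k) * Complex.I * ((2 * π : ℝ) : ℂ)) = 1 := by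
          rw [Complex.exp_eq_one_iff]
          refine ⟨2 ^ j - 2 ^ k, ?_⟩
          push_cast
          ring
        rw [e1]
        simp
    rw [Finset.sum_congr rfl this]
    simp
    ring
  exact_mod_cast hc

lemma lacunary_eLpNorm (N : ℕ) :
    eLpNorm (fun x : ℝ => ∑ k ∈ Finset.range N, Complex.I *
      Complex.exp (2 ^ k * Complex.I * x)) 2 (volume.restrict (Set.Ioc (0:ℝ) (2 * π))) =
      ENNReal.ofReal (Real.sqrt (2 * π * N)) := by
  have hm : MemLp (fun x : ℝ => ∑ k ∈ Finset.range N, Complex.I *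
      Complex.exp (2 ^ k * Complex.I * x)) 2 (volume.restrict (Set.Ioc (0:ℝ) (2 * π))) := by
    refine MemLp.of_bound (Continuous.aestronglyMeasurable (by fun_prop)) N ?_
    refine Filter.Eventually.of_forall fun x => ?_
    refine (norm_sum_le _ _).trans ?_
    have : ∀ k ∈ Finset.range N, ‖Complex.I * Complex.exp (2 ^ k * Complex.I * x)‖ ≤ 1 := by
      intro k _
      have : (2 ^ k * Complex.I * x : ℂ) = ((2 ^ k * x : ℝ) : ℂ) * Complex.I := by
        push_cast; ring
      rw [this, norm_mul, Complex.norm_exp_ofReal_mul_I]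
      simp
    refine (Finset.sum_le_sum this).trans ?_
    simp
  rw [hm.eLpNorm_eq_integral_rpow_norm (by norm_num) (by norm_num)]
  have := lacunary_integral N
  simp only [ENNReal.toReal_ofNat, Real.rpow_two]
  rw [this, Real.sqrt_eq_rpow]
  norm_num

lemma sum_dyadic_le (g : ℝ → ℝ) (M : ℝ) (h1 : ∀ t, |g t| ≤ M * |t|)
    (h2 : ∀ t, 2 < |t| → g t = 0) (N : ℕ) (t : ℝ) :
    ∑ k ∈ Finset.range N, |g (2 ^ k * t)| ≤ 4 * M := by
  have hM : 0 ≤ M := by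
    have := h1 1
    have h0 := abs_nonneg (g 1)
    simp at this
    linarith
  induction N with
  | zero => simpa using hM
  | succ N ih =>
    by_cases h : 2 < |2 ^ N * t|
    · rw [Finset.sum_range_succ, h2 _ h]
      simpa using ih
    · push Not at h
      have hs : ∀ k ∈ Finset.range (N + 1), |g (2 ^ k * t)| ≤ M * |t| * 2 ^ k := by
        intro k _
        refine (h1 _).trans (le_of_eq ?_)
        rw [abs_mul, abs_of_pos (by positivity : (0:ℝ) < 2 ^ k)]
        ring
      refine (Finset.sum_le_sum hs).trans ?_
      rw [← Finset.mul_sum, geom_sum_eq (by norm_num)]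
      rw [abs_mul, abs_of_pos (by positivity : (0:ℝ) < 2 ^ N)] at h
      have : M * (2 ^ N * |t|) ≤ M * 2 := mul_le_mul_of_nonneg_left h hM
      have h3 : 0 ≤ M * |t| := by positivity
      rw [pow_succ]
      nlinarith

/-- modulated cutoff -/
noncomputable def aFun (χ : ℝ → ℝ) (k : ℕ) (s : ℝ) : ℂ :=
  (χ s : ℂ) * Complex.exp (2 ^ k * Complex.I * s)

noncomputable def bFun (φ : ℝ → ℝ) (k : ℕ) (t : ℝ) : ℂ :=
  (((4 ^ k)⁻¹ * φ (2 ^ k * t) : ℝ) : ℂ)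

lemma deriv_modulated (u : ℝ → ℂ) (hu : Differentiable ℝ u) (k : ℕ) (s : ℝ) :
    deriv (fun s : ℝ => u s * Complex.exp (2 ^ k * Complex.I * s)) s =
      (deriv u s + 2 ^ k * Complex.I * u s) * Complex.exp (2 ^ k * Complex.I * s) := by
  have h1 : HasDerivAt (fun s : ℝ => Complex.exp (2 ^ k * Complex.I * s))
      (Complex.exp (2 ^ k * Complex.I * s) * (2 ^ k * Complex.I * 1)) s :=
    ((Complex.ofRealCLM.hasDerivAt (x := s)).const_mul (2 ^ k * Complex.I : ℂ)).cexp
  have h2 := (hu s).hasDerivAt.mul h1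
  refine (HasDerivAt.deriv h2).trans ?_
  ring

lemma deriv_ofReal_comp (u : ℝ → ℝ) (hu : Differentiable ℝ u) :
    deriv (fun s : ℝ => (u s : ℂ)) = fun s => ((deriv u s : ℝ) : ℂ) := by
  ext s
  exact (hu s).hasDerivAt.ofReal_comp.deriv

lemma deriv_aFun (χ : ℝ → ℝ) (h : ContDiff ℝ (⊤ : ℕ∞) χ) (k : ℕ) :
    deriv (aFun χ k) = fun s => (((deriv χ s : ℝ) : ℂ) + 2 ^ k * Complex.I * χ s) *
      Complex.exp (2 ^ k * Complex.I * s) := by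
  have hd : Differentiable ℝ χ := h.differentiable (by simp)
  ext s
  unfold aFun
  rw [deriv_modulated _ (by fun_prop), deriv_ofReal_comp χ hd]

lemma deriv2_aFun (χ : ℝ → ℝ) (h : ContDiff ℝ (⊤ : ℕ∞) χ) (k : ℕ) (s : ℝ) :
    deriv (deriv (aFun χ k)) s = (((deriv (deriv χ) s : ℝ) : ℂ) +
      2 * (2 ^ k * Complex.I) * ((deriv χ s : ℝ) : ℂ) - 4 ^ k * χ s) *
      Complex.exp (2 ^ k * Complex.I * s) := by
  have hd : Differentiable ℝ χ := h.differentiable (by simp)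
  have hd' : ContDiff ℝ (⊤ : ℕ∞) (deriv χ) := (contDiff_infty_iff_deriv.1 h).2
  have hd2 : Differentiable ℝ (deriv χ) := hd'.differentiable (by simp)
  rw [deriv_aFun χ h, deriv_modulated _ (by fun_prop)]
  have e : deriv (fun s : ℝ => ((deriv χ s : ℝ) : ℂ) + 2 ^ k * Complex.I * χ s) s =
      ((deriv (deriv χ) s : ℝ) : ℂ) + 2 ^ k * Complex.I * ((deriv χ s : ℝ) : ℂ) := by
    exact ((hd2 s).hasDerivAt.ofReal_comp.add
      ((hd s).hasDerivAt.ofReal_comp.const_mul _)).deriv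
  rw [e]
  have h4 : (4:ℂ) ^ k = 2 ^ k * 2 ^ k := by rw [← mul_pow]; norm_num
  rw [h4]
  ring_nf
  rw [Complex.I_sq]
  ring

lemma deriv_bFun (φ : ℝ → ℝ) (h : ContDiff ℝ (⊤ : ℕ∞) φ) (k : ℕ) :
    deriv (bFun φ k) = fun t => (((2 ^ k)⁻¹ * deriv φ (2 ^ k * t) : ℝ) : ℂ) := by
  have hd : Differentiable ℝ φ := h.differentiable (by simp)
  unfold bFun
  rw [deriv_ofReal_comp _ (by fun_prop)]
  ext t
  congr 1
  rw [deriv_const_mul_field, deriv_comp_mul_left, smul_eq_mul]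
  have h4 : (4:ℝ) ^ k = 2 ^ k * 2 ^ k := by rw [← mul_pow]; norm_num
  rw [h4]
  field_simp

lemma deriv2_bFun (φ : ℝ → ℝ) (h : ContDiff ℝ (⊤ : ℕ∞) φ) (k : ℕ) (t : ℝ) :
    deriv (deriv (bFun φ k)) t = ((deriv (deriv φ) (2 ^ k * t) : ℝ) : ℂ) := by
  have hd' : ContDiff ℝ (⊤ : ℕ∞) (deriv φ) := (contDiff_infty_iff_deriv.1 h).2
  have hd2 : Differentiable ℝ (deriv φ) := hd'.differentiable (by simp)
  rw [deriv_bFun φ h, deriv_ofReal_comp _ (by fun_prop)]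
  simp only
  congr 1
  rw [deriv_const_mul_field, deriv_comp_mul_left, smul_eq_mul]
  field_simp

lemma aFun_compact (χ : ℝ → ℝ) (hc : HasCompactSupport χ) (k : ℕ) :
    HasCompactSupport (aFun χ k) :=
  HasCompactSupport.mul_right (hc.comp_left (g := fun x : ℝ => (x : ℂ)) (by simp))

lemma aFun_smooth (χ : ℝ → ℝ) (h : ContDiff ℝ (⊤ : ℕ∞) χ) (k : ℕ) :
    ContDiff ℝ (⊤ : ℕ∞) (aFun χ k) := by
  unfold aFun
  have h1 : ContDiff ℝ (⊤ : ℕ∞) (fun x : ℝ => (x : ℂ)) := Complex.ofRealCLM.contDiff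
  exact (h1.comp h).mul (contDiff_const.mul h1).cexp

lemma bFun_smooth (φ : ℝ → ℝ) (h : ContDiff ℝ (⊤ : ℕ∞) φ) (k : ℕ) :
    ContDiff ℝ (⊤ : ℕ∞) (bFun φ k) := by
  unfold bFun
  have h1 : ContDiff ℝ (⊤ : ℕ∞) (fun x : ℝ => (x : ℂ)) := Complex.ofRealCLM.contDiff
  exact h1.comp (contDiff_const.mul (h.comp (contDiff_const.mul contDiff_id)))

lemma two_lt_of {k : ℕ} {t : ℝ} (ht : 2 < |t|) : 2 < |2 ^ k * t| := by
  rw [abs_mul, abs_of_pos (by positivity : (0:ℝ) < 2 ^ k)]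
  have : (1:ℝ) ≤ 2 ^ k := one_le_pow₀ (by norm_num)
  nlinarith

lemma not_mem_Icc_two {t : ℝ} (ht : t ∉ Set.Icc (-2:ℝ) 2) : 2 < |t| := by
  by_contra h
  push Not at h
  exact ht (abs_le.1 h)

lemma bFun_compact (φ : ℝ → ℝ) (h0 : ∀ t, 2 < |t| → φ t = 0) (k : ℕ) :
    HasCompactSupport (bFun φ k) := by
  refine HasCompactSupport.intro (K := Set.Icc (-2) 2) isCompact_Icc fun t ht => ?_
  simp [bFun, h0 _ (two_lt_of (not_mem_Icc_two ht))]

/-- The test function, with its bound and the value of its transform. -/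
lemma exists_test (χ φ : ℝ → ℝ) (M : ℝ) (hχ : ContDiff ℝ (⊤ : ℕ∞) χ) (hχc : HasCompactSupport χ)
    (hφ : ContDiff ℝ (⊤ : ℕ∞) φ) (h0 : ∀ t, 2 < |t| → φ t = 0)
    (h0' : ∀ t, 2 < |t| → deriv (deriv φ) t = 0)
    (hM : ∀ t, |φ t| ≤ M * |t|) (hM' : ∀ t, |deriv (deriv φ) t| ≤ M * |t|)
    (hχ1 : ∀ s ∈ Set.Ioc (0:ℝ) (2 * π), χ s = 1) (hχ1' : ∀ s ∈ Set.Ioc (0:ℝ) (2 * π), deriv χ s = 0)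
    (hφ1 : ∀ t, |t| < 1 → deriv φ t = 1) (N : ℕ) :
    ∃ f : 𝓢(ℝ × ℝ, ℂ),
      (∀ s t, ‖f (s, t)‖ ≤ 4 * M * (|deriv (deriv χ) s| + 2 * |deriv χ s| + |χ s| + |χ s|)) ∧
      (∀ y, |y| < (2 ^ N)⁻¹ → ∀ x ∈ Set.Ioc (0:ℝ) (2 * π),
        doubleRiesz (fun s t => f (s, t)) x y = ∑ k ∈ Finset.range N, Complex.I *
          Complex.exp (2 ^ k * Complex.I * x)) := by
  let a : ℕ → 𝓢(ℝ, ℂ) := fun k => (aFun_compact χ hχc k).toSchwartzMap (aFun_smooth χ hχ k)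
  let b : ℕ → 𝓢(ℝ, ℂ) := fun k => (bFun_compact φ h0 k).toSchwartzMap (bFun_smooth φ hφ k)
  have ha0 : ∀ k s, a k s = aFun χ k s := fun k s => rfl
  have hb0 : ∀ k s, b k s = bFun φ k s := fun k s => rfl
  have ha1 : ∀ k s, derivCLM ℂ ℂ (a k) s = deriv (aFun χ k) s := fun k s => rfl
  have hb1 : ∀ k s, derivCLM ℂ ℂ (b k) s = deriv (bFun φ k) s := fun k s => rfl
  have ha2 : ∀ k s, derivCLM ℂ ℂ (derivCLM ℂ ℂ (a k)) s = deriv (deriv (aFun χ k)) s :=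
    fun k s => rfl
  have hb2 : ∀ k s, derivCLM ℂ ℂ (derivCLM ℂ ℂ (b k)) s = deriv (deriv (bFun φ k)) s :=
    fun k s => rfl
  let F : ℝ × ℝ → ℂ := fun q => ∑ k ∈ Finset.range N,
    (derivCLM ℂ ℂ (derivCLM ℂ ℂ (a k)) q.1 * b k q.2 +
      a k q.1 * derivCLM ℂ ℂ (derivCLM ℂ ℂ (b k)) q.2)
  have hFs : ContDiff ℝ (⊤ : ℕ∞) F := by
    refine ContDiff.sum fun k _ => ?_
    have hs : ∀ g : 𝓢(ℝ, ℂ), ContDiff ℝ (⊤ : ℕ∞) (fun q : ℝ × ℝ => g q.1) :=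
      fun g => (g.smooth _).comp contDiff_fst
    have hs' : ∀ g : 𝓢(ℝ, ℂ), ContDiff ℝ (⊤ : ℕ∞) (fun q : ℝ × ℝ => g q.2) :=
      fun g => (g.smooth _).comp contDiff_snd
    exact ((hs _).mul (hs' _)).add ((hs _).mul (hs' _))
  have hFc : HasCompactSupport F := by
    refine HasCompactSupport.intro (K := tsupport χ ×ˢ Set.Icc (-2) 2)
      (IsCompact.prod hχc isCompact_Icc) fun q hq => ?_
    refine Finset.sum_eq_zero fun k _ => ?_
    rw [Set.mem_prod, not_and_or] at hq
    rw [ha2, hb2, ha0, hb0, deriv2_aFun χ hχ, deriv2_bFun φ hφ]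
    rcases hq with hq | hq
    · have e0 : χ q.1 = 0 := image_eq_zero_of_notMem_tsupport hq
      have hq1 : q.1 ∉ tsupport (deriv χ) := fun h => hq (tsupport_deriv_subset h)
      have e1 : deriv χ q.1 = 0 := image_eq_zero_of_notMem_tsupport hq1
      have hq2 : q.1 ∉ tsupport (deriv (deriv χ)) := fun h => hq1 (tsupport_deriv_subset h)
      have e2 : deriv (deriv χ) q.1 = 0 := image_eq_zero_of_notMem_tsupport hq2
      simp [aFun, e0, e1, e2]
    · have := two_lt_of (k := k) (not_mem_Icc_two hq)
      simp [bFun, h0 _ this, h0' _ this]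
  refine ⟨hFc.toSchwartzMap hFs, ?_, ?_⟩
  · intro s t
    change ‖F (s, t)‖ ≤ _
    have hexp : ∀ k : ℕ, ‖Complex.exp (2 ^ k * Complex.I * s)‖ = 1 := by
      intro k
      have : (2 ^ k * Complex.I * s : ℂ) = ((2 ^ k * s : ℝ) : ℂ) * Complex.I := by
        push_cast; ring
      rw [this, Complex.norm_exp_ofReal_mul_I]
    have hterm : ∀ k ∈ Finset.range N, ‖derivCLM ℂ ℂ (derivCLM ℂ ℂ (a k)) s * b k t +
        a k s * derivCLM ℂ ℂ (derivCLM ℂ ℂ (b k)) t‖ ≤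
        (|deriv (deriv χ) s| + 2 * |deriv χ s| + |χ s|) * |φ (2 ^ k * t)| +
          |χ s| * |deriv (deriv φ) (2 ^ k * t)| := by
      intro k _
      rw [ha2, hb2, ha0, hb0, deriv2_aFun χ hχ, deriv2_bFun φ hφ]
      refine (norm_add_le _ _).trans (add_le_add ?_ ?_)
      · rw [norm_mul, norm_mul, hexp, mul_one]
        unfold bFun
        have h2 : (1:ℝ) ≤ 2 ^ k := one_le_pow₀ (by norm_num)
        have h4 : (4:ℝ) ^ k = 2 ^ k * 2 ^ k := by rw [← mul_pow]; norm_num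
        have hA : ‖((deriv (deriv χ) s : ℝ) : ℂ) + 2 * (2 ^ k * Complex.I) * ((deriv χ s : ℝ) : ℂ)
            - 4 ^ k * χ s‖ ≤ 4 ^ k * (|deriv (deriv χ) s| + 2 * |deriv χ s| + |χ s|) := by
          refine (norm_sub_le _ _).trans ?_
          refine (add_le_add_left (norm_add_le _ _) _).trans ?_
          simp only [norm_mul, norm_pow, Complex.norm_I, Complex.norm_real, Real.norm_eq_abs,
            Complex.norm_ofNat, mul_one]
          rw [h4]
          have p1 := abs_nonneg (deriv (deriv χ) s)
          have p2 := abs_nonneg (deriv χ s)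
          have q1 : (1:ℝ) ≤ 2 ^ k * 2 ^ k := by nlinarith
          have q2 : (2:ℝ) ^ k ≤ 2 ^ k * 2 ^ k := by nlinarith
          nlinarith [mul_le_mul_of_nonneg_right q1 p1, mul_le_mul_of_nonneg_right q2 p2]
        refine (mul_le_mul_of_nonneg_right hA (norm_nonneg _)).trans (le_of_eq ?_)
        rw [Complex.norm_real, Real.norm_eq_abs, abs_mul, abs_of_pos (by positivity :
          (0:ℝ) < (4 ^ k)⁻¹)]
        field_simp
      · rw [norm_mul]
        unfold aFun
        rw [norm_mul, hexp, Complex.norm_real, Complex.norm_real, mul_one]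
        rfl
    refine (norm_sum_le _ _).trans ((Finset.sum_le_sum hterm).trans ?_)
    rw [Finset.sum_add_distrib, ← Finset.mul_sum, ← Finset.mul_sum]
    have s1 := sum_dyadic_le φ M hM h0 N t
    have s2 := sum_dyadic_le (deriv (deriv φ)) M hM' h0' N t
    have p1 : 0 ≤ |deriv (deriv χ) s| + 2 * |deriv χ s| + |χ s| := by positivity
    have := mul_le_mul_of_nonneg_left s1 p1
    have := mul_le_mul_of_nonneg_left s2 (abs_nonneg (χ s))
    linarith
  · intro y hy x hx
    change doubleRiesz (fun s t => ∑ k ∈ Finset.range N,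
      (derivCLM ℂ ℂ (derivCLM ℂ ℂ (a k)) s * b k t +
      a k s * derivCLM ℂ ℂ (derivCLM ℂ ℂ (b k)) t)) x y = _
    rw [doubleRiesz_eq]
    refine Finset.sum_congr rfl fun k hk => ?_
    rw [ha1, hb1, deriv_aFun χ hχ, deriv_bFun φ hφ]
    have hk' : (2:ℝ) ^ k ≤ 2 ^ N := pow_le_pow_right₀ (by norm_num) (Finset.mem_range.1 hk).le
    have : |2 ^ k * y| < 1 := by
      rw [abs_mul, abs_of_pos (by positivity : (0:ℝ) < 2 ^ k)]
      calc (2:ℝ) ^ k * |y| ≤ 2 ^ N * |y| := by gcongr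
        _ < 2 ^ N * (2 ^ N)⁻¹ := by gcongr
        _ = 1 := by field_simp
    simp only [hφ1 _ this, hχ1 x hx, hχ1' x hx]
    push_cast
    field_simp
    ring

lemma exists_chi : ∃ χ : ℝ → ℝ, ContDiff ℝ (⊤ : ℕ∞) χ ∧ HasCompactSupport χ ∧
    (∀ s ∈ Set.Ioc (0:ℝ) (2 * π), χ s = 1) ∧ (∀ s ∈ Set.Ioc (0:ℝ) (2 * π), deriv χ s = 0) := by
  let χ : ContDiffBump (0:ℝ) := ⟨7, 8, by norm_num, by norm_num⟩
  have h1 : ∀ s : ℝ, |s| < 7 → χ s = 1 := fun s hs =>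
    χ.one_of_mem_closedBall (by simpa [χ] using hs.le)
  have hs : ∀ s ∈ Set.Ioc (0:ℝ) (2 * π), |s| < 7 := by
    intro s hs
    rw [abs_of_pos hs.1]
    have := Real.pi_lt_d2
    linarith [hs.2]
  refine ⟨χ, χ.contDiff, χ.hasCompactSupport, fun s h => h1 s (hs s h), fun s h => ?_⟩
  have : χ =ᶠ[nhds s] fun _ => (1:ℝ) := by
    filter_upwards [(isOpen_lt continuous_abs continuous_const).mem_nhds (hs s h)] with u hu
    exact h1 u hu
  rw [this.deriv_eq]
  simp

lemma exists_phi : ∃ (φ : ℝ → ℝ) (M : ℝ), ContDiff ℝ (⊤ : ℕ∞) φ ∧ (∀ t, 2 < |t| → φ t = 0) ∧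
    (∀ t, 2 < |t| → deriv (deriv φ) t = 0) ∧
    (∀ t, |φ t| ≤ M * |t|) ∧ (∀ t, |deriv (deriv φ) t| ≤ M * |t|) ∧
    (∀ t, |t| < 1 → deriv φ t = 1) := by
  let β : ContDiffBump (0:ℝ) := ⟨1, 2, by norm_num, by norm_num⟩
  have h1 : ∀ s : ℝ, |s| < 1 → β s = 1 := fun s hs =>
    β.one_of_mem_closedBall (by simpa [β] using hs.le)
  have h2 : ∀ s : ℝ, 2 < |s| → β s = 0 := fun s hs =>
    β.zero_of_le_dist (by simpa [β] using hs.le)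
  let φ : ℝ → ℝ := fun t => t * β t
  have hφ : ContDiff ℝ (⊤ : ℕ∞) φ := contDiff_id.mul β.contDiff
  have hφc : HasCompactSupport φ := β.hasCompactSupport.mul_left
  have hd : ∀ t, |t| < 1 → deriv φ t = 1 := by
    intro t ht
    have : φ =ᶠ[nhds t] fun u => u := by
      filter_upwards [(isOpen_lt continuous_abs continuous_const).mem_nhds ht] with u hu
      simp [φ, h1 u hu]
    rw [this.deriv_eq]
    simp
  have hdd : ∀ t, |t| < 1 → deriv (deriv φ) t = 0 := by
    intro t ht
    have : deriv φ =ᶠ[nhds t] fun u => (1:ℝ) := by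
      filter_upwards [(isOpen_lt continuous_abs continuous_const).mem_nhds ht] with u hu
      exact hd u hu
    rw [this.deriv_eq]
    simp
  have hz : ∀ t : ℝ, 2 < |t| → deriv (deriv φ) t = 0 := by
    intro t ht
    have hop : IsOpen {u : ℝ | 2 < |u|} := isOpen_lt continuous_const continuous_abs
    have e : ∀ u ∈ {u : ℝ | 2 < |u|}, deriv φ u = 0 := by
      intro u hu
      have : φ =ᶠ[nhds u] fun _ => (0:ℝ) := by
        filter_upwards [hop.mem_nhds hu] with v hv
        simp [φ, h2 v hv]
      rw [this.deriv_eq]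
      simp
    have : deriv φ =ᶠ[nhds t] fun _ => (0:ℝ) := by
      filter_upwards [hop.mem_nhds ht] with v hv
      exact e v hv
    rw [this.deriv_eq]
    simp
  have hd' : ContDiff ℝ (⊤ : ℕ∞) (deriv φ) := (contDiff_infty_iff_deriv.1 hφ).2
  have hd2 : ContDiff ℝ (⊤ : ℕ∞) (deriv (deriv φ)) := (contDiff_infty_iff_deriv.1 hd').2
  obtain ⟨B, hB⟩ := hd2.continuous.bounded_above_of_compact_support hφc.deriv.deriv
  refine ⟨φ, max 1 B, hφ, fun t ht => by simp [φ, h2 t ht], hz, ?_, ?_, hd⟩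
  · intro t
    have b1 : |β t| ≤ 1 := by rw [abs_of_nonneg β.nonneg]; exact β.le_one
    have : |φ t| = |t| * |β t| := abs_mul _ _
    rw [this]
    have := le_max_left 1 B
    nlinarith [abs_nonneg t]
  · intro t
    by_cases ht : |t| < 1
    · rw [hdd t ht]
      simp only [abs_zero]
      positivity
    · push Not at ht
      have := hB t
      rw [Real.norm_eq_abs] at this
      have h3 := le_max_right 1 B
      have h4 := le_max_left 1 B
      nlinarith

/-- For every `p ≥ 2` there is no constant `C_p` with
`‖‖R₁₂f(x,y)‖_{L^p_x}‖_{L^∞_y} ≤ C_p ‖‖f(x,y)‖_{L^∞_y}‖_{L^p_x}` for all Schwartz `f`. -/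
theorem no_mixed_norm_estimate_ge_two (p : ℝ) (hp : 2 ≤ p) :
    ¬ ∃ C : ℝ, ∀ f : 𝓢(ℝ × ℝ, ℂ),
      essSup (fun y : ℝ =>
          eLpNorm (fun x : ℝ => doubleRiesz (fun s t => f (s, t)) x y)
            (ENNReal.ofReal p) volume) volume ≤
        ENNReal.ofReal C *
          eLpNorm (fun x : ℝ =>
            (essSup (fun y : ℝ => (‖f (x, y)‖₊ : ℝ≥0∞)) volume).toReal)
            (ENNReal.ofReal p) volume := by
  rintro ⟨C, hC⟩
  obtain ⟨χ, hχ, hχc, hχ1, hχ1'⟩ := exists_chi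
  obtain ⟨φ, M, hφ, h0, h0', hM, hM', hφ1⟩ := exists_phi
  have hM0 : 0 ≤ M := by
    have := hM 1
    have h0 := abs_nonneg (φ 1)
    simp at this
    linarith
  set H : ℝ → ℝ := fun s => 4 * M * (|deriv (deriv χ) s| + 2 * |deriv χ s| + |χ s| + |χ s|) with hH
  have hχd : ContDiff ℝ (⊤ : ℕ∞) (deriv χ) := (contDiff_infty_iff_deriv.1 hχ).2
  have hχdd : ContDiff ℝ (⊤ : ℕ∞) (deriv (deriv χ)) := (contDiff_infty_iff_deriv.1 hχd).2
  have hHcont : Continuous H := by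
    have := hχ.continuous
    have := hχd.continuous
    have := hχdd.continuous
    fun_prop
  have hHc : HasCompactSupport H := by
    refine HasCompactSupport.intro (K := tsupport χ) hχc fun s hq => ?_
    have e0 : χ s = 0 := image_eq_zero_of_notMem_tsupport hq
    have hq1 : s ∉ tsupport (deriv χ) := fun h => hq (tsupport_deriv_subset h)
    have e1 : deriv χ s = 0 := image_eq_zero_of_notMem_tsupport hq1
    have hq2 : s ∉ tsupport (deriv (deriv χ)) := fun h => hq1 (tsupport_deriv_subset h)
    have e2 : deriv (deriv χ) s = 0 := image_eq_zero_of_notMem_tsupport hq2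
    simp [hH, e0, e1, e2]
  have hHm : eLpNorm H (ENNReal.ofReal p) volume < ∞ :=
    (hHcont.memLp_of_hasCompactSupport hHc).eLpNorm_lt_top
  set μ : Measure ℝ := volume.restrict (Set.Ioc (0:ℝ) (2 * π)) with hμ
  set D : ℝ≥0∞ := μ Set.univ ^ (1 / (2:ℝ≥0∞).toReal - 1 / (ENNReal.ofReal p).toReal) with hD
  have hDtop : D < ∞ := by
    refine ENNReal.rpow_lt_top_of_nonneg ?_ ?_
    · rw [ENNReal.toReal_ofReal (by linarith), ENNReal.toReal_ofNat, sub_nonneg]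
      exact one_div_le_one_div_of_le (by norm_num) hp
    · exact measure_ne_top _ _
  have main : ∀ N : ℕ, ENNReal.ofReal (Real.sqrt (2 * π * N)) ≤
      ENNReal.ofReal C * eLpNorm H (ENNReal.ofReal p) volume * D := by
    intro N
    obtain ⟨f, hf1, hf2⟩ := exists_test χ φ M hχ hχc hφ h0 h0' hM hM' hχ1 hχ1' hφ1 N
    have hCf := hC f
    have hr : eLpNorm (fun x : ℝ =>
        (essSup (fun y : ℝ => (‖f (x, y)‖₊ : ℝ≥0∞)) volume).toReal)
        (ENNReal.ofReal p) volume ≤ eLpNorm H (ENNReal.ofReal p) volume := by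
      refine eLpNorm_mono_real fun x => ?_
      rw [Real.norm_of_nonneg ENNReal.toReal_nonneg]
      have hH0 : 0 ≤ H x := (norm_nonneg _).trans (hf1 x 0)
      refine ENNReal.toReal_le_of_le_ofReal hH0 ?_
      refine essSup_le_of_ae_le _ (Filter.Eventually.of_forall fun y => ?_)
      change ‖f (x, y)‖ₑ ≤ _
      rw [← ofReal_norm]
      exact ENNReal.ofReal_le_ofReal (hf1 x y)
    have hl : ∃ y : ℝ, |y| < (2 ^ N)⁻¹ ∧ eLpNorm (fun x : ℝ =>
        doubleRiesz (fun s t => f (s, t)) x y) (ENNReal.ofReal p) volume ≤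
        essSup (fun y : ℝ =>
          eLpNorm (fun x : ℝ => doubleRiesz (fun s t => f (s, t)) x y)
            (ENNReal.ofReal p) volume) volume := by
      have hae := ENNReal.ae_le_essSup (μ := (volume : Measure ℝ)) (fun y : ℝ =>
          eLpNorm (fun x : ℝ => doubleRiesz (fun s t => f (s, t)) x y)
            (ENNReal.ofReal p) volume)
      have hd := Measure.dense_of_ae hae
      have hop : IsOpen {y : ℝ | |y| < (2 ^ N)⁻¹} := isOpen_lt continuous_abs continuous_const
      obtain ⟨y, hy1, hy2⟩ := hd.exists_mem_open hop ⟨0, by simp⟩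
      exact ⟨y, hy2, hy1⟩
    obtain ⟨y, hy, hle⟩ := hl
    set G : ℝ → ℂ := fun x : ℝ => ∑ k ∈ Finset.range N, Complex.I *
      Complex.exp (2 ^ k * Complex.I * x) with hG
    have e : eLpNorm G (ENNReal.ofReal p) μ ≤ eLpNorm (fun x : ℝ =>
        doubleRiesz (fun s t => f (s, t)) x y) (ENNReal.ofReal p) volume := by
      have : eLpNorm G (ENNReal.ofReal p) μ = eLpNorm (fun x : ℝ =>
        doubleRiesz (fun s t => f (s, t)) x y) (ENNReal.ofReal p) μ := by
        refine eLpNorm_congr_ae ?_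
        filter_upwards [ae_restrict_mem measurableSet_Ioc] with x hx
        exact (hf2 y hy x hx).symm
      rw [this]
      exact eLpNorm_mono_measure _ Measure.restrict_le_self
    have h2p : (2:ℝ≥0∞) ≤ ENNReal.ofReal p := by
      rw [← ENNReal.ofReal_ofNat]
      exact ENNReal.ofReal_le_ofReal hp
    have hcmp := eLpNorm_le_eLpNorm_mul_rpow_measure_univ (μ := μ) (f := G) h2p
      (Continuous.aestronglyMeasurable (by fun_prop))
    rw [lacunary_eLpNorm N] at hcmp
    refine hcmp.trans ?_
    gcongr
    exact e.trans (hle.trans (hCf.trans (by gcongr)))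
  set Q := ENNReal.ofReal C * eLpNorm H (ENNReal.ofReal p) volume * D with hQ
  have hQt : Q < ∞ := ENNReal.mul_lt_top (ENNReal.mul_lt_top ENNReal.ofReal_lt_top hHm) hDtop
  obtain ⟨N, hN⟩ := exists_nat_gt (Q.toReal ^ 2)
  have h1 := (ENNReal.ofReal_le_iff_le_toReal hQt.ne).1 (main N)
  rw [Real.sqrt_le_left ENNReal.toReal_nonneg] at h1
  have hpi := Real.pi_gt_three
  have : (0:ℝ) ≤ N := Nat.cast_nonneg N
  nlinarith
end

section
/- For every p ≥ 2 there is no constant C_p such that ‖‖∂_x∂_y u(x,y)‖_{L^p_x}‖_{L^∞_y} ≤ C_p ‖‖Δu(x,y)‖_{L^∞_y}‖_{L^p_x} for all Schwartz functions u on ℝ². -/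
open MeasureTheory SchwartzMap
open scoped ENNReal

/-- Mixed partial derivative `∂ₓ∂_y u` on `ℝ²`. -/
noncomputable def pdXY (u : ℝ × ℝ → ℂ) : ℝ × ℝ → ℂ :=
  fun z => fderiv ℝ (fun w => fderiv ℝ u w ((1 : ℝ), (0 : ℝ))) z ((0 : ℝ), (1 : ℝ))

/-- The Laplacian `Δu = ∂ₓ²u + ∂_y²u` on `ℝ²`. -/
noncomputable def lap (u : ℝ × ℝ → ℂ) : ℝ × ℝ → ℂ :=
  fun z => fderiv ℝ (fun w => fderiv ℝ u w ((1 : ℝ), (0 : ℝ))) z ((1 : ℝ), (0 : ℝ)) +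
    fderiv ℝ (fun w => fderiv ℝ u w ((0 : ℝ), (1 : ℝ))) z ((0 : ℝ), (1 : ℝ))

/-- A smooth cutoff together with its first two derivatives. -/
lemma exists_cutoff (R : ℝ) (hR : 0 < R) : ∃ c c1 c2 : ℝ → ℂ, ∃ M : ℝ, 0 ≤ M ∧
    ContDiff ℝ (⊤ : ℕ∞) c ∧ (∀ t, HasDerivAt c (c1 t) t) ∧ (∀ t, HasDerivAt c1 (c2 t) t) ∧
    (∀ t, ‖c t‖ ≤ M ∧ ‖c1 t‖ ≤ M ∧ ‖c2 t‖ ≤ M) ∧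
    (∀ t, |t| < R → c t = 1 ∧ c1 t = 0 ∧ c2 t = 0) ∧
    (∀ t, R + 1 < |t| → c t = 0 ∧ c1 t = 0 ∧ c2 t = 0) := by
  let b : ContDiffBump (0 : ℝ) := ⟨R, R + 1, hR, by linarith⟩
  let c : ℝ → ℂ := fun t => (b t : ℂ)
  have hc : ContDiff ℝ (⊤ : ℕ∞) c := Complex.ofRealCLM.contDiff.comp b.contDiff
  have hc1 : ContDiff ℝ (⊤ : ℕ∞) (deriv c) := hc.iterate_deriv 1
  have hc2 : ContDiff ℝ (⊤ : ℕ∞) (deriv (deriv c)) := hc.iterate_deriv 2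
  have hs : HasCompactSupport c := b.hasCompactSupport.comp_left (g := fun x : ℝ => (x : ℂ)) (by simp)
  obtain ⟨M0, h0⟩ := hs.exists_bound_of_continuous hc.continuous
  obtain ⟨M1, h1⟩ := hs.deriv.exists_bound_of_continuous hc1.continuous
  obtain ⟨M2, h2⟩ := hs.deriv.deriv.exists_bound_of_continuous hc2.continuous
  have hin : ∀ t, |t| < R → c t = 1 := fun t ht => by
    have := b.one_of_mem_closedBall (x := t) (by simpa [b] using ht.le)
    simp [c, this]
  have hout : ∀ t, R + 1 < |t| → c t = 0 := fun t ht => by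
    have := b.zero_of_le_dist (x := t) (by simpa [b] using ht.le)
    simp [c, this]
  have key : ∀ (f : ℝ → ℂ) (U : Set ℝ) (a : ℂ), IsOpen U → (∀ t ∈ U, f t = a) →
      ∀ t ∈ U, deriv f t = 0 := by
    intro f U a hU hf t ht
    have : f =ᶠ[nhds t] fun _ => a := by
      filter_upwards [hU.mem_nhds ht] with s hs using hf s hs
    rw [this.deriv_eq]; simp
  have hU1 : IsOpen {t : ℝ | |t| < R} := isOpen_lt continuous_abs continuous_const
  have hU2 : IsOpen {t : ℝ | R + 1 < |t|} := isOpen_lt continuous_const continuous_abs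
  have a1 := key c _ 1 hU1 hin
  have a2 := key c _ 0 hU2 hout
  have a3 := key _ _ 0 hU1 a1
  have a4 := key _ _ 0 hU2 a2
  refine ⟨c, deriv c, deriv (deriv c), max M0 (max M1 M2), ?_, hc,
    fun t => (hc.differentiable (by simp) t).hasDerivAt,
    fun t => (hc1.differentiable (by simp) t).hasDerivAt, ?_, ?_, ?_⟩
  · exact le_max_of_le_left ((norm_nonneg _).trans (h0 0))
  · exact fun t => ⟨(h0 t).trans (le_max_left _ _),
      (h1 t).trans ((le_max_left _ _).trans (le_max_right _ _)),
      (h2 t).trans ((le_max_right _ _).trans (le_max_right _ _))⟩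
  · exact fun t ht => ⟨hin t ht, a1 t ht, a3 t ht⟩
  · exact fun t ht => ⟨hout t ht, a2 t ht, a4 t ht⟩

lemma fderiv_sum_prod {ι : Type*} (s : Finset ι) (A B A' B' : ι → ℝ → ℂ)
    (hA : ∀ j t, HasDerivAt (A j) (A' j t) t) (hB : ∀ j t, HasDerivAt (B j) (B' j t) t)
    (z v : ℝ × ℝ) :
    fderiv ℝ (fun z : ℝ × ℝ => ∑ j ∈ s, A j z.1 * B j z.2) z v =
      ∑ j ∈ s, ((v.1 : ℂ) * (A' j z.1 * B j z.2) + (v.2 : ℂ) * (A j z.1 * B' j z.2)) := by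
  have h : ∀ j ∈ s, HasFDerivAt (fun z : ℝ × ℝ => A j z.1 * B j z.2) _ z := fun j _ =>
    ((hA j z.1).hasFDerivAt.comp z hasFDerivAt_fst).mul
      ((hB j z.2).hasFDerivAt.comp z hasFDerivAt_snd)
  rw [(HasFDerivAt.fun_sum h).fderiv]
  simp only [sum_apply]
  refine Finset.sum_congr rfl fun j _ => ?_
  simp
  ring

lemma pdXY_sum_prod {ι : Type*} (s : Finset ι) (A B A' B' : ι → ℝ → ℂ) (A'' : ι → ℝ → ℂ)
    (hA : ∀ j t, HasDerivAt (A j) (A' j t) t) (hA' : ∀ j t, HasDerivAt (A' j) (A'' j t) t)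
    (hB : ∀ j t, HasDerivAt (B j) (B' j t) t) (x y : ℝ) :
    pdXY (fun z : ℝ × ℝ => ∑ j ∈ s, A j z.1 * B j z.2) (x, y) =
      ∑ j ∈ s, A' j x * B' j y := by
  unfold pdXY
  simp only [fderiv_sum_prod s A B A' B' hA hB]
  simp [fderiv_sum_prod s A' B A'' B' hA' hB]

lemma lap_sum_prod {ι : Type*} (s : Finset ι) (A B A' B' : ι → ℝ → ℂ) (A'' B'' : ι → ℝ → ℂ)
    (hA : ∀ j t, HasDerivAt (A j) (A' j t) t) (hA' : ∀ j t, HasDerivAt (A' j) (A'' j t) t)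
    (hB : ∀ j t, HasDerivAt (B j) (B' j t) t) (hB' : ∀ j t, HasDerivAt (B' j) (B'' j t) t)
    (x y : ℝ) :
    lap (fun z : ℝ × ℝ => ∑ j ∈ s, A j z.1 * B j z.2) (x, y) =
      ∑ j ∈ s, (A'' j x * B j y + A j x * B'' j y) := by
  unfold lap
  simp only [fderiv_sum_prod s A B A' B' hA hB]
  simp [fderiv_sum_prod s A' B A'' B' hA' hB, fderiv_sum_prod s A B' A' B'' hA hB',
    Finset.sum_add_distrib]

/-- Uniform bound of a dyadic sum. -/
lemma dyadic_bound (N : ℕ) (y : ℝ) :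
    ∑ j ∈ Finset.range N, |2 ^ j * y| / (1 + (2 ^ j * y) ^ 2) ≤ 4 := by
  have key : ∀ t : ℝ, 0 ≤ t → t / (1 + t ^ 2) ≤ 4 * (2 * t / (1 + 2 * t) - t / (1 + t)) := by
    intro t ht
    have : 4 * (2 * t / (1 + 2 * t) - t / (1 + t)) = 4 * t / ((1 + 2 * t) * (1 + t)) := by
      field_simp; ring
    rw [this, div_le_div_iff₀ (by positivity) (by positivity)]
    nlinarith [mul_nonneg ht (sq_nonneg (t - 1)), mul_nonneg ht (sq_nonneg t)]
  have h2 : ∀ j ∈ Finset.range N, |2 ^ j * y| / (1 + (2 ^ j * y) ^ 2) ≤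
      4 * (2 ^ (j + 1) * |y| / (1 + 2 ^ (j + 1) * |y|) - 2 ^ j * |y| / (1 + 2 ^ j * |y|)) := by
    intro j _
    have := key (2 ^ j * |y|) (by positivity)
    rw [abs_mul, abs_of_pos (by positivity : (0 : ℝ) < 2 ^ j), mul_pow, ← sq_abs y, ← mul_pow]
    convert this using 4 <;> ring
  refine (Finset.sum_le_sum h2).trans ?_
  rw [← Finset.mul_sum, Finset.sum_range_sub (fun j => 2 ^ j * |y| / (1 + 2 ^ j * |y|))]
  have h3 : 2 ^ N * |y| / (1 + 2 ^ N * |y|) ≤ 1 := by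
    rw [div_le_one (by positivity)]; linarith
  have h4 : 0 ≤ 2 ^ 0 * |y| / (1 + 2 ^ 0 * |y|) := by positivity
  linarith

lemma geom_bound (N : ℕ) : ∑ j ∈ Finset.range N, ((2 : ℝ) ^ j)⁻¹ ≤ 2 := by
  have : ∀ N : ℕ, ∑ j ∈ Finset.range N, ((2 : ℝ) ^ j)⁻¹ = 2 - 2 * ((2 : ℝ) ^ N)⁻¹ := by
    intro N
    induction N with
    | zero => simp
    | succ n ih => rw [Finset.sum_range_succ, ih, pow_succ]; field_simp; ring
  rw [this]
  have : (0 : ℝ) < ((2 : ℝ) ^ N)⁻¹ := by positivity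
  linarith

/-- The lacunary exponential sum. -/
noncomputable def lacSum (N : ℕ) (x : ℝ) : ℂ :=
  ∑ j ∈ Finset.range N, Complex.exp (Complex.I * 2 ^ j * x)

lemma continuous_lacSum (N : ℕ) : Continuous (lacSum N) := by
  unfold lacSum; fun_prop

lemma integral_lacSum (N : ℕ) :
    ∫ x in (0 : ℝ)..(2 * Real.pi), ‖lacSum N x‖ ^ 2 = 2 * Real.pi * N := by
  have h1 : ∀ x : ℝ, ((‖lacSum N x‖ ^ 2 : ℝ) : ℂ) = ∑ j ∈ Finset.range N, ∑ k ∈ Finset.range N,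
      Complex.exp ((Complex.I * (2 ^ j - 2 ^ k)) * x) := by
    intro x
    push_cast
    rw [← Complex.mul_conj', lacSum, map_sum, Finset.sum_mul_sum]
    refine Finset.sum_congr rfl fun j _ => Finset.sum_congr rfl fun k _ => ?_
    rw [← Complex.exp_conj, ← Complex.exp_add]
    congr 1
    simp only [map_mul, map_pow, Complex.conj_I, Complex.conj_ofReal, Complex.conj_ofNat]
    ring
  have h2 : ∀ j k : ℕ, ∫ x in (0 : ℝ)..(2 * Real.pi),
      Complex.exp ((Complex.I * (2 ^ j - 2 ^ k)) * x) = if j = k then (2 * Real.pi : ℂ) else 0 := by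
    intro j k
    split_ifs with h
    · subst h; simp
    · have hne : (2 ^ j - 2 ^ k : ℂ) ≠ 0 := by
        rw [sub_ne_zero]
        intro h'
        exact h (Nat.pow_right_injective le_rfl (by exact_mod_cast h'))
      rw [integral_exp_mul_complex (mul_ne_zero Complex.I_ne_zero hne)]
      have : Complex.exp ((Complex.I * (2 ^ j - 2 ^ k)) * ((2 * Real.pi : ℝ) : ℂ)) = 1 := by
        rw [Complex.exp_eq_one_iff]
        refine ⟨2 ^ j - 2 ^ k, ?_⟩
        push_cast; ring
      rw [this]; simp
  have h3 : ((∫ x in (0 : ℝ)..(2 * Real.pi), ‖lacSum N x‖ ^ 2 : ℝ) : ℂ) =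
      ((2 * Real.pi * N : ℝ) : ℂ) := by
    rw [← intervalIntegral.integral_ofReal]
    simp_rw [h1]
    rw [intervalIntegral.integral_finsetSum]
    · have : ∀ j ∈ Finset.range N, ∫ x in (0 : ℝ)..(2 * Real.pi), ∑ k ∈ Finset.range N,
          Complex.exp ((Complex.I * (2 ^ j - 2 ^ k)) * x) = 2 * Real.pi := by
        intro j hj
        rw [intervalIntegral.integral_finsetSum]
        · simp_rw [h2]; simp [Finset.mem_range.1 hj]
        · intro k _
          exact Continuous.intervalIntegrable (by fun_prop) _ _
      rw [Finset.sum_congr rfl this]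
      simp; ring
    · intro k _
      exact Continuous.intervalIntegrable (by fun_prop) _ _
  exact_mod_cast h3

lemma eLpNorm_lacSum (N : ℕ) :
    eLpNorm (lacSum N) 2 (volume.restrict (Set.Ioc 0 (2 * Real.pi))) ^ (2 : ℝ) =
      ENNReal.ofReal (2 * Real.pi * N) := by
  have := eLpNorm_nnreal_pow_eq_lintegral (f := lacSum N) (p := 2)
    (μ := volume.restrict (Set.Ioc 0 (2 * Real.pi))) (by norm_num)
  have e : ((2 : NNReal) : ℝ≥0∞) = 2 := by norm_num
  have e' : ((2 : NNReal) : ℝ) = 2 := by norm_num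
  rw [e, e'] at this
  rw [this, ← integral_lacSum, intervalIntegral.integral_of_le (by positivity),
    ofReal_integral_eq_lintegral_ofReal]
  · refine lintegral_congr fun x => ?_
    rw [ENNReal.rpow_two, ENNReal.ofReal_pow (norm_nonneg _), ofReal_norm]
  · have : Continuous fun x => ‖lacSum N x‖ ^ 2 := ((continuous_lacSum N).norm.pow 2)
    exact this.integrableOn_Ioc
  · exact Filter.Eventually.of_forall fun x => by positivity

/-- The counterexample family. -/
lemma exists_family : ∃ L : ℝ, 0 ≤ L ∧ ∀ N : ℕ, ∃ u : 𝓢(ℝ × ℝ, ℂ),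
    (∀ x y, ‖lap (⇑u) (x, y)‖ ≤ L) ∧ (∀ x y, 8 < |x| → lap (⇑u) (x, y) = 0) ∧
    (∃ δ > 0, ∀ x y, |x| < 7 → |y| < δ → pdXY (⇑u) (x, y) = Complex.I * lacSum N x) := by
  obtain ⟨c, c1, c2, M, hM, hcd, hc, hc1, hb, hin, hout⟩ := exists_cutoff 7 (by norm_num)
  obtain ⟨d, d1, d2, P, hP, hdd, hd, hd1, hdb, hdin, hdout⟩ := exists_cutoff 1 (by norm_num)
  let w : ℝ → ℂ := fun t => t * d t
  let w1 : ℝ → ℂ := fun t => d t + t * d1 t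
  let w2 : ℝ → ℂ := fun t => 2 * d1 t + t * d2 t
  have hid : ∀ t : ℝ, HasDerivAt (fun t : ℝ => (t : ℂ)) 1 t := fun t => Complex.ofRealCLM.hasDerivAt
  have hw : ∀ t, HasDerivAt w (w1 t) t := fun t => by
    refine ((hid t).mul (hd t)).congr_deriv ?_; simp [w1]
  have hw1 : ∀ t, HasDerivAt w1 (w2 t) t := fun t => by
    refine ((hd t).add ((hid t).mul (hd1 t))).congr_deriv ?_; simp [w2]; ring
  have hwb : ∀ t, ‖w t‖ ≤ 2 * P := fun t => by
    rcases le_or_gt |t| 2 with h | h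
    · simp only [w, norm_mul, Complex.norm_real, Real.norm_eq_abs]
      exact mul_le_mul h (hdb t).1 (norm_nonneg _) (by norm_num)
    · have := (hdout t (by linarith)).1
      simp [w, this, hP]
  have hh : ∀ t, ‖w2 t - w t‖ ≤ (15 * P + 2) * (|t| / (1 + t ^ 2)) := fun t => by
    have hnn : 0 ≤ |t| / (1 + t ^ 2) := by positivity
    rcases lt_or_ge |t| 1 with h | h
    · obtain ⟨e0, e1, e2⟩ := hdin t h
      simp only [w, w2, e0, e1, e2]
      have : ‖(2 * 0 + t * 0 - t * 1 : ℂ)‖ = |t| := by simp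
      rw [this]
      have h2 : |t| ≤ 2 * (|t| / (1 + t ^ 2)) := by
        rw [← mul_div_assoc, le_div_iff₀ (by positivity), ← sq_abs]
        have := abs_nonneg t
        nlinarith [mul_nonneg this (by nlinarith : 0 ≤ 1 - |t| ^ 2)]
      nlinarith [mul_nonneg hP hnn]
    · rcases le_or_gt |t| 2 with h' | h'
      · have b1 : ‖w2 t‖ ≤ 4 * P := by
          refine (norm_add_le _ _).trans ?_
          simp only [norm_mul, Complex.norm_real, Real.norm_eq_abs]
          have := mul_le_mul h' (hdb t).2.2 (norm_nonneg _) (by norm_num)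
          have := (hdb t).2.1
          simp; linarith
        have b2 := (norm_sub_le (w2 t) (w t)).trans (add_le_add b1 (hwb t))
        have : 2 / 5 ≤ |t| / (1 + t ^ 2) := by
          rw [div_le_div_iff₀ (by norm_num) (by positivity), ← sq_abs]
          nlinarith
        nlinarith [mul_le_mul_of_nonneg_left this hP]
      · obtain ⟨e0, e1, e2⟩ := hdout t (by linarith)
        simp only [w, w2, e0, e1, e2]
        simp only [mul_zero, add_zero, sub_zero, norm_zero]
        positivity
  refine ⟨M * ((15 * P + 2) * 4) + 6 * M * P * 2, by positivity, fun N => ?_⟩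
  let E : ℕ → ℝ → ℂ := fun j x => Complex.exp (Complex.I * 2 ^ j * x)
  let A : ℕ → ℝ → ℂ := fun j x => c x * E j x
  let A1 : ℕ → ℝ → ℂ := fun j x => (c1 x + Complex.I * 2 ^ j * c x) * E j x
  let A2 : ℕ → ℝ → ℂ := fun j x =>
    (c2 x + 2 * Complex.I * 2 ^ j * c1 x - (2 ^ j) ^ 2 * c x) * E j x
  let B : ℕ → ℝ → ℂ := fun j y => ((2 ^ j) ^ 2)⁻¹ * w (2 ^ j * y)
  let B1 : ℕ → ℝ → ℂ := fun j y => (2 ^ j)⁻¹ * w1 (2 ^ j * y)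
  let B2 : ℕ → ℝ → ℂ := fun j y => w2 (2 ^ j * y)
  have hE : ∀ j t, HasDerivAt (E j) (Complex.I * 2 ^ j * E j t) t := fun j t => by
    refine (((hid t).const_mul (Complex.I * 2 ^ j)).cexp).congr_deriv ?_
    simp [E]; ring
  have hEn : ∀ j t, ‖E j t‖ = 1 := fun j t => by
    have : Complex.I * 2 ^ j * (t : ℂ) = ((2 ^ j * t : ℝ) : ℂ) * Complex.I := by push_cast; ring
    simp only [E, this, Complex.norm_exp_ofReal_mul_I]
  have hA : ∀ j t, HasDerivAt (A j) (A1 j t) t := fun j t => by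
    refine ((hc t).mul (hE j t)).congr_deriv ?_; simp [A1]; ring
  have hA1 : ∀ j t, HasDerivAt (A1 j) (A2 j t) t := fun j t => by
    refine (((hc1 t).add ((hc t).const_mul (Complex.I * 2 ^ j))).mul (hE j t)).congr_deriv ?_
    simp only [A2, Pi.add_apply]
    linear_combination ((2 ^ j) ^ 2 * c t * E j t) * Complex.I_sq
  have hlin : ∀ (j : ℕ) (t : ℝ), HasDerivAt (fun y : ℝ => 2 ^ j * y) (2 ^ j) t := fun j t => by
    simpa using (hasDerivAt_id t).const_mul ((2 : ℝ) ^ j)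
  have h2 : ∀ j : ℕ, (2 ^ j : ℂ) ≠ 0 := fun j => pow_ne_zero _ two_ne_zero
  have hB : ∀ j t, HasDerivAt (B j) (B1 j t) t := fun j t => by
    refine ((((hw (2 ^ j * t)).scomp t (hlin j t)).const_mul (((2 ^ j) ^ 2)⁻¹ : ℂ))).congr_deriv ?_
    simp only [B1, Complex.real_smul]
    have := h2 j
    push_cast; field_simp
  have hB1 : ∀ j t, HasDerivAt (B1 j) (B2 j t) t := fun j t => by
    refine ((((hw1 (2 ^ j * t)).scomp t (hlin j t)).const_mul ((2 ^ j)⁻¹ : ℂ))).congr_deriv ?_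
    simp only [B2, Complex.real_smul]
    have := h2 j
    push_cast; field_simp
  let f : ℝ × ℝ → ℂ := fun z => ∑ j ∈ Finset.range N, A j z.1 * B j z.2
  have hAc : ∀ j, ContDiff ℝ (⊤ : ℕ∞) (A j) := fun j => by
    refine hcd.mul (ContDiff.cexp (contDiff_const.mul Complex.ofRealCLM.contDiff))
  have hwc : ContDiff ℝ (⊤ : ℕ∞) w := Complex.ofRealCLM.contDiff.mul hdd
  have hBc : ∀ j, ContDiff ℝ (⊤ : ℕ∞) (B j) := fun j =>
    contDiff_const.mul (hwc.comp (contDiff_const.mul contDiff_id))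
  have hf : ContDiff ℝ (⊤ : ℕ∞) f := ContDiff.sum fun j _ =>
    ((hAc j).comp contDiff_fst).mul ((hBc j).comp contDiff_snd)
  have hfs : HasCompactSupport f := by
    refine HasCompactSupport.intro (isCompact_closedBall (0 : ℝ × ℝ) 8) fun z hz => ?_
    refine Finset.sum_eq_zero fun j _ => ?_
    rw [mem_closedBall_zero_iff, Prod.norm_def, max_le_iff, not_and_or] at hz
    simp only [Real.norm_eq_abs, not_le] at hz
    rcases hz with hz | hz
    · simp [A, (hout z.1 (by linarith)).1]
    · have : 1 + 1 < |2 ^ j * z.2| := by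
        rw [abs_mul, abs_of_pos (by positivity : (0 : ℝ) < 2 ^ j)]
        nlinarith [one_le_pow₀ (one_le_two : (1 : ℝ) ≤ 2) (n := j)]
      simp [B, w, (hdout _ this).1]
  have hlap := lap_sum_prod (Finset.range N) A B A1 B1 A2 B2 hA hA1 hB hB1
  have hpd := pdXY_sum_prod (Finset.range N) A B A1 B1 A2 hA hA1 hB
  refine ⟨hfs.toSchwartzMap hf, ?_, ?_, ?_⟩
  · intro x y
    change ‖lap f (x, y)‖ ≤ _
    rw [hlap]
    have hterm : ∀ j ∈ Finset.range N, ‖A2 j x * B j y + A j x * B2 j y‖ ≤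
        M * ((15 * P + 2) * (|2 ^ j * y| / (1 + (2 ^ j * y) ^ 2))) +
          6 * M * P * ((2 : ℝ) ^ j)⁻¹ := by
      intro j _
      have hj := h2 j
      have e : A2 j x * B j y + A j x * B2 j y = (c x * (w2 (2 ^ j * y) - w (2 ^ j * y)) +
          (c2 x * ((2 ^ j)⁻¹ * (2 ^ j)⁻¹) + 2 * Complex.I * (2 ^ j)⁻¹ * c1 x) * w (2 ^ j * y))
            * E j x := by
        simp only [A2, A, B, B2]; field_simp; ring
      rw [e, norm_mul, hEn, mul_one]
      refine (norm_add_le _ _).trans (add_le_add ?_ ?_)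
      · rw [norm_mul]
        exact mul_le_mul (hb x).1 (hh _) (norm_nonneg _) hM
      · rw [norm_mul]
        have q : (0 : ℝ) < (2 ^ j)⁻¹ := by positivity
        have q1 : ((2 : ℝ) ^ j)⁻¹ ≤ 1 := inv_le_one_of_one_le₀ (one_le_pow₀ one_le_two)
        have : ‖c2 x * ((2 ^ j)⁻¹ * (2 ^ j)⁻¹) + 2 * Complex.I * (2 ^ j)⁻¹ * c1 x‖ ≤
            3 * M * ((2 : ℝ) ^ j)⁻¹ := by
          refine (norm_add_le _ _).trans ?_
          simp only [norm_mul, norm_inv, norm_pow, Complex.norm_ofNat, Complex.norm_I]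
          have i1 := mul_le_mul (hb x).2.2 (mul_le_mul_of_nonneg_right q1 q.le) (by positivity) hM
          have i2 := mul_le_mul_of_nonneg_left (hb x).2.1 q.le
          nlinarith
        refine (mul_le_mul this (hwb _) (norm_nonneg _) (by positivity)).trans (le_of_eq ?_)
        ring
    refine (norm_sum_le _ _).trans ((Finset.sum_le_sum hterm).trans ?_)
    rw [Finset.sum_add_distrib, ← Finset.mul_sum, ← Finset.mul_sum, ← Finset.mul_sum]
    have := dyadic_bound N y
    have := geom_bound N
    gcongr
  · intro x y hx
    change lap f (x, y) = 0
    rw [hlap]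
    refine Finset.sum_eq_zero fun j _ => ?_
    obtain ⟨e0, e1, e2⟩ := hout x (by linarith)
    simp [A, A2, e0, e1, e2]
  · refine ⟨((2 : ℝ) ^ N)⁻¹, by positivity, fun x y hx hy => ?_⟩
    change pdXY f (x, y) = _
    rw [hpd, lacSum, Finset.mul_sum]
    refine Finset.sum_congr rfl fun j hj => ?_
    have hlt : |2 ^ j * y| < 1 := by
      rw [abs_mul, abs_of_pos (by positivity : (0 : ℝ) < 2 ^ j)]
      have h3 : (2 : ℝ) ^ j ≤ 2 ^ N := pow_le_pow_right₀ one_le_two (Finset.mem_range.1 hj).le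
      calc (2 : ℝ) ^ j * |y| ≤ 2 ^ N * |y| := by gcongr
        _ < 2 ^ N * ((2 : ℝ) ^ N)⁻¹ := by gcongr
        _ = 1 := by field_simp
    obtain ⟨e0, e1, e2⟩ := hin x hx
    obtain ⟨g0, g1, g2⟩ := hdin _ hlt
    have := h2 j
    simp only [A1, B1, w1, e0, e1, g0, g1, E]
    field_simp
    ring

/-- For every `p ≥ 2` there is no constant `C_p` with
`‖‖∂ₓ∂_y u(x,y)‖_{L^p_x}‖_{L^∞_y} ≤ C_p ‖‖Δu(x,y)‖_{L^∞_y}‖_{L^p_x}` for all Schwartz `u`. -/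
theorem no_mixed_derivative_estimate (p : ℝ) (hp : 2 ≤ p) :
    ¬ ∃ C : ℝ, ∀ u : 𝓢(ℝ × ℝ, ℂ),
      essSup (fun y : ℝ =>
          eLpNorm (fun x : ℝ => pdXY (⇑u) (x, y)) (ENNReal.ofReal p) volume) volume ≤
        ENNReal.ofReal C *
          eLpNorm (fun x : ℝ =>
            (essSup (fun y : ℝ => (‖lap (⇑u) (x, y)‖₊ : ℝ≥0∞)) volume).toReal)
            (ENNReal.ofReal p) volume := by
  rintro ⟨C, hC⟩
  obtain ⟨L, hL, hfam⟩ := exists_family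
  have hp0 : ENNReal.ofReal p ≠ 0 := by simp; linarith
  set I : Set ℝ := Set.Ioc 0 (2 * Real.pi) with hI
  let K : ℝ≥0∞ := ENNReal.ofReal C *
    (volume (Set.Icc (-8 : ℝ) 8) ^ (ENNReal.ofReal p).toReal⁻¹ * ENNReal.ofReal L)
  let D : ℝ≥0∞ := (volume.restrict I) Set.univ ^
    (1 / (2 : ℝ≥0∞).toReal - 1 / (ENNReal.ofReal p).toReal)
  have hpr : (ENNReal.ofReal p).toReal = p := ENNReal.toReal_ofReal (by linarith)
  have hK : K ≠ ∞ := by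
    refine ENNReal.mul_ne_top ENNReal.ofReal_ne_top
      (ENNReal.mul_ne_top (ENNReal.rpow_ne_top_of_nonneg ?_ ?_) ENNReal.ofReal_ne_top)
    · rw [hpr]; positivity
    · simp
  have hD : D ≠ ∞ := by
    refine ENNReal.rpow_ne_top_of_nonneg ?_ ?_
    · rw [hpr]
      have : 1 / p ≤ 1 / 2 := one_div_le_one_div_of_le (by norm_num) hp
      simpa using this
    · simp [hI, ENNReal.mul_eq_top]
  have main : ∀ N : ℕ, ENNReal.ofReal (2 * Real.pi * N) ≤ (K * D) ^ (2 : ℝ) := by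
    intro N
    obtain ⟨u, hu1, hu2, δ, hδ, hu3⟩ := hfam N
    rw [← eLpNorm_lacSum]
    refine ENNReal.rpow_le_rpow ?_ (by norm_num)
    refine (eLpNorm_le_eLpNorm_mul_rpow_measure_univ (q := ENNReal.ofReal p) ?_
      (continuous_lacSum N).aestronglyMeasurable).trans ?_
    · rw [← ENNReal.ofReal_ofNat]; exact ENNReal.ofReal_le_ofReal hp
    refine mul_le_mul_left ?_ D
    -- pick a good `y`
    have hae := ENNReal.ae_le_essSup (μ := (volume : Measure ℝ)) (fun y : ℝ =>
          eLpNorm (fun x : ℝ => pdXY (⇑u) (x, y)) (ENNReal.ofReal p) volume)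
    obtain ⟨y, hy1, hy2⟩ : ∃ y ∈ Metric.ball (0 : ℝ) δ, eLpNorm (fun x : ℝ => pdXY (⇑u) (x, y))
        (ENNReal.ofReal p) volume ≤ essSup (fun y : ℝ =>
          eLpNorm (fun x : ℝ => pdXY (⇑u) (x, y)) (ENNReal.ofReal p) volume) volume := by
      by_contra! hcon
      have h0 : volume (Metric.ball (0 : ℝ) δ) = 0 := by
        refine measure_mono_null (fun y hy => ?_) (ae_iff.1 hae)
        exact not_le.2 (hcon y hy)
      exact (Metric.measure_ball_pos volume (0 : ℝ) hδ).ne' h0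
    have step1 : eLpNorm (lacSum N) (ENNReal.ofReal p) (volume.restrict I) ≤
        eLpNorm (fun x : ℝ => pdXY (⇑u) (x, y)) (ENNReal.ofReal p) volume := by
      refine le_trans (le_of_eq ?_) (eLpNorm_mono_measure _ (Measure.restrict_le_self (s := I)))
      refine eLpNorm_congr_norm_ae ?_
      filter_upwards [ae_restrict_mem measurableSet_Ioc] with x hx
      have hx7 : |x| < 7 := by
        rw [abs_of_pos hx.1]
        have := Real.pi_lt_d2
        have := hx.2
        linarith
      rw [hu3 x y hx7 (by simpa using hy1)]
      simp
    refine step1.trans (hy2.trans ((hC u).trans ?_))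
    refine mul_le_mul_right ?_ (ENNReal.ofReal C)
    set g : ℝ → ℝ := fun x : ℝ =>
      (essSup (fun y : ℝ => (‖lap (⇑u) (x, y)‖₊ : ℝ≥0∞)) volume).toReal with hg
    have hg0 : ∀ x, x ∉ Set.Icc (-8 : ℝ) 8 → g x = 0 := by
      intro x hx
      have hx8 : 8 < |x| := by
        by_contra! h
        exact hx (abs_le.1 h)
      simp [hg, hu2 x _ hx8]
    have hgL : ∀ x, ‖g x‖ ≤ L := by
      intro x
      rw [Real.norm_of_nonneg ENNReal.toReal_nonneg]
      refine ENNReal.toReal_le_of_le_ofReal hL ?_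
      refine essSup_le_of_ae_le _ (Filter.Eventually.of_forall fun y => ?_)
      change ‖lap (⇑u) (x, y)‖ₑ ≤ _
      rw [← ofReal_norm]
      exact ENNReal.ofReal_le_ofReal (hu1 x y)
    have hind : g = (Set.Icc (-8 : ℝ) 8).indicator g := by
      symm
      rw [Set.indicator_eq_self]
      intro x hx
      by_contra h
      exact hx (hg0 x h)
    rw [hind, eLpNorm_indicator_eq_eLpNorm_restrict measurableSet_Icc]
    refine (eLpNorm_le_of_ae_bound (Filter.Eventually.of_forall hgL)).trans ?_
    simp
  have hfin : (K * D) ^ (2 : ℝ) ≠ ∞ :=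
    ENNReal.rpow_ne_top_of_nonneg (by norm_num) (ENNReal.mul_ne_top hK hD)
  obtain ⟨N, hN⟩ := exists_nat_gt ((K * D) ^ (2 : ℝ)).toReal
  have h1 := (ENNReal.ofReal_le_iff_le_toReal hfin).1 (main N)
  have h2 : (N : ℝ) ≤ 2 * Real.pi * N := by
    have := Real.pi_gt_three
    have : (0 : ℝ) ≤ N := N.cast_nonneg
    nlinarith
  linarith
end
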